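/- For all integers d ≥ 1 and k ≥ 1 there exists a constant C = C(d,k) < ∞ such that for every real polynomial Q in d variables of total degree at most k, one has |∫_{[0,1]^d} e(Q(ξ)) dξ| ≤ C · sup_{μ ∈ ℝ} |{ξ ∈ [0,1]^d : μ ≤ Q(ξ) ≤ μ + 1}|. -/

import Mathlib

open MeasureTheory Real Set
open scoped ENNReal

/-!
Let `g t` be the measure of `{t ≤ Q ≤ t + 1/2}`. Since `e (t ± 1/2) = - e t`, Fubini turns `∫ e(Q)`
into a constant multiple of `∫ (g (t + 1/2) + g (t - 1/2) - 2 g t) e(t) dt`, so it suffices to bound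
the `L¹` norm of this second difference by a multiple of `S = sup g`.

For `Q` with generic coefficients, the second difference at `t` is at most `S` times a sum of terms
`C / (1 + (t - Re z)²)` over boundedly many points `z ∈ ℂ`, and each of these terms has a bounded
integral. The `z` are the roots of polynomials eliminated from `Q(ξ) - t` and `Q(ξ) - t - 1/2`: on a
disc in the `t`-plane which is free of them, a cylindrical decomposition has the same combinatorics
over every point, and its sections are holomorphic with small relative variation. Integrating out
one variable of `ξ` at a time, the Schwarz lemma controls the first differences of `g` to first
order in the inverse radius of the disc, and the symmetric second differences to second order.

An arbitrary `Q` is reached by perturbing its coefficients off the zero locus of a fixed polynomial,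
at the cost of widening the windows from length `1/2` to length `1`.
-/

namespace StationarySet

open Metric Topology Filter Polynomial ComplexConjugate

/-! ### Continuous root sections -/

section LocalGraph

variable {X Y : Type*} [TopologicalSpace X] [TopologicalSpace Y] {E : Set (X × Y)} {U : Set X}

theorem isLocalHomeomorphOn_fst (hU : IsOpen U)
    (h : ∀ x ∈ E, x.1 ∈ U → ∃ ψ : X → Y, ContinuousAt ψ x.1 ∧ ∀ᶠ y in 𝓝 x, y ∈ E ↔ ψ y.1 = y.2) :
    IsLocalHomeomorphOn (fun x : E => x.1.1) ((fun x : E => x.1.1) ⁻¹' U) := by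
  have hcont : Continuous fun x : E => x.1.1 := by fun_prop
  have nhds_le : ∀ x : E, x.1.1 ∈ U → 𝓝 x.1.1 ≤ map (fun x : E => x.1.1) (𝓝 x) := by
    intro x hx A hA
    obtain ⟨ψ, hψ, hgraph⟩ := h x.1 x.2 hx
    rw [mem_map, nhds_subtype, mem_comap] at hA
    obtain ⟨B, hB, hBA⟩ := hA
    have hψx : ψ x.1.1 = x.1.2 := hgraph.self_of_nhds.1 x.2
    have hlim : Tendsto (fun τ => (τ, ψ τ)) (𝓝 x.1.1) (𝓝 x.1) := by
      simpa [ContinuousAt, hψx] using continuousAt_id.prodMk hψ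
    filter_upwards [hlim hB, hlim.eventually hgraph] with τ hτB hτ
    exact hBA (show (⟨(τ, ψ τ), hτ.2 rfl⟩ : E) ∈ Subtype.val ⁻¹' B from hτB)
  rw [isLocalHomeomorphOn_iff_isOpenEmbedding_restrict]
  intro x hx
  obtain ⟨ψ, -, hgraph⟩ := h x.1 x.2 hx
  obtain ⟨W, hW, hWo, hxW⟩ := _root_.eventually_nhds_iff.1 hgraph
  set V : Set E := {y | y.1 ∈ W ∧ y.1.1 ∈ U}
  have hV : IsOpen V := (hWo.preimage continuous_subtype_val).inter (hU.preimage hcont)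
  refine ⟨V, hV.mem_nhds ⟨hxW, hx⟩, .of_continuous_injective_isOpenMap (by fun_prop)
    (injOn_iff_injective.1 fun y hy z hz hyz => ?_) (IsOpenMap.of_nhds_le fun y => ?_)⟩
  · have hyz' : y.1.1 = z.1.1 := hyz
    refine Subtype.ext (Prod.ext hyz' ?_)
    rw [← (hW y hy.1).1 y.2, ← (hW z hz.1).1 z.2, hyz']
  · have hmap := nhds_le y.1 y.2.2
    rwa [← hV.isOpenEmbedding_subtypeVal.map_nhds_eq y, Filter.map_map] at hmap

theorem exists_continuousOn_section {x₀ : X} {a : Y} [SimplyConnectedSpace U]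
    [LocallyPathConnectedSpace U] (hcov : IsCoveringMapOn (fun x : E => x.1.1) U) (hx₀ : x₀ ∈ U)
    (ha : (x₀, a) ∈ E) :
    ∃ θ : X → Y, ContinuousOn θ U ∧ θ x₀ = a ∧ (∀ τ ∈ U, (τ, θ τ) ∈ E) ∧
      ∀ θ' : X → Y, ContinuousOn θ' U → θ' x₀ = a → (∀ τ ∈ U, (τ, θ' τ) ∈ E) → EqOn θ' θ U := by
  obtain ⟨G, ⟨hG₀, hG⟩, huniq⟩ := hcov.existsUnique_continuousMap_lifts
    (⟨Subtype.val, continuous_subtype_val⟩ : C(U, X)) (a₀ := ⟨x₀, hx₀⟩) (e₀ := ⟨(x₀, a), ha⟩) rfl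
    Subtype.property
  set θ : X → Y := Function.extend Subtype.val (fun τ => (G τ).1.2) fun _ => a
  have hθ : ∀ τ : U, θ τ = (G τ).1.2 := Subtype.val_injective.extend_apply _ _
  have hGθ : ∀ τ : U, (G τ).1 = (τ.1, θ τ) := fun τ => Prod.ext (congrFun hG τ) (hθ τ).symm
  refine ⟨θ, ?_, ?_, fun τ hτ => hGθ ⟨τ, hτ⟩ ▸ (G _).2, fun θ' hc h₀ hE τ hτ => ?_⟩
  · rw [continuousOn_iff_continuous_domRestrict, show U.domRestrict θ = _ from funext hθ]
    fun_prop
  · exact (hθ ⟨x₀, hx₀⟩).trans (congrArg (fun x : E => x.1.2) hG₀)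
  · have hc' : Continuous fun τ : U => θ' τ := continuousOn_iff_continuous_domRestrict.1 hc
    have := huniq ⟨fun τ => ⟨(τ, θ' τ), hE τ τ.2⟩, (continuous_subtype_val.prodMk hc').subtype_mk _⟩
      ⟨Subtype.ext (Prod.ext rfl h₀), rfl⟩
    rw [hθ ⟨τ, hτ⟩, ← this]
    rfl

theorem exists_eventually_eq_zero_iff_of_hasStrictFDerivAt
    {𝕜 : Type*} [NontriviallyNormedField 𝕜] [CompleteSpace 𝕜] {F : 𝕜 × 𝕜 → 𝕜} {x : 𝕜 × 𝕜}
    {F' : 𝕜 × 𝕜 →L[𝕜] 𝕜} (hF : HasStrictFDerivAt F F' x) (hx : F x = 0) (hF' : F' (0, 1) ≠ 0) :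
    ∃ ψ : 𝕜 → 𝕜, DifferentiableAt 𝕜 ψ x.1 ∧ ∀ᶠ y in 𝓝 x, F y = 0 ↔ ψ y.1 = y.2 := by
  have hinv : (F' ∘L .inr 𝕜 𝕜 𝕜).IsInvertible := by
    refine ⟨ContinuousLinearEquiv.unitsEquivAut 𝕜 (Units.mk0 _ hF'), ?_⟩
    ext
    simp
  exact ⟨_, (hF.hasStrictFDerivAt_implicitFunctionOfProdDomain hinv).hasFDerivAt.differentiableAt,
    by simpa only [hx] using hF.eventually_apply_eq_iff_implicitFunctionOfProdDomain hinv⟩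

theorem exists_differentiableOn_section {E : Set (ℂ × ℂ)} {r : ℝ} (hr : 0 < r) (hE : IsCompact E)
    (h : ∀ x ∈ E, x.1 ∈ ball (0 : ℂ) r →
      ∃ ψ : ℂ → ℂ, DifferentiableAt ℂ ψ x.1 ∧ ∀ᶠ y in 𝓝 x, y ∈ E ↔ ψ y.1 = y.2)
    {a : ℂ} (ha : (0, a) ∈ E) :
    ∃ θ : ℂ → ℂ, DifferentiableOn ℂ θ (ball 0 r) ∧ θ 0 = a ∧
      (∀ τ ∈ ball (0 : ℂ) r, (τ, θ τ) ∈ E) ∧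
      ∀ θ' : ℂ → ℂ, ContinuousOn θ' (ball 0 r) → θ' 0 = a →
        (∀ τ ∈ ball (0 : ℂ) r, (τ, θ' τ) ∈ E) → EqOn θ' θ (ball 0 r) := by
  have : CompactSpace E := isCompact_iff_compactSpace.1 hE
  have hcov : IsCoveringMapOn (fun x : E => x.1.1) (ball 0 r) :=
    .of_isLocalHomeomorphOn (by fun_prop) <| isLocalHomeomorphOn_fst isOpen_ball fun x hx hxr =>
      (h x hx hxr).imp fun _ hψ => ⟨hψ.1.continuousAt, hψ.2⟩
  have : ContractibleSpace (ball (0 : ℂ) r) :=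
    (convex_ball (0 : ℂ) r).contractibleSpace ⟨0, mem_ball_self hr⟩
  have : LocallyPathConnectedSpace (ball (0 : ℂ) r) := isOpen_ball.locallyPathConnectedSpace
  obtain ⟨θ, hθ, hθ₀, hθE, huniq⟩ := exists_continuousOn_section hcov (mem_ball_self hr) ha
  refine ⟨θ, fun τ hτ => ?_, hθ₀, hθE, huniq⟩
  obtain ⟨ψ, hψ, hgraph⟩ := h _ (hθE τ hτ) hτ
  have hlim : Tendsto (fun σ => (σ, θ σ)) (𝓝 τ) (𝓝 (τ, θ τ)) :=
    tendsto_id.prodMk_nhds (hθ.continuousAt (isOpen_ball.mem_nhds hτ))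
  refine (hψ.congr_of_eventuallyEq ?_).differentiableWithinAt
  filter_upwards [hlim.eventually hgraph, isOpen_ball.mem_nhds hτ] with σ hσ hσr
  exact (hσ.1 (hθE σ hσr)).symm

end LocalGraph

section NearRoots

variable {𝕜 : Type*} [NormedField 𝕜]

theorem sum_norm_coeff_prod_X_sub_C_mul_pow_le (s : Multiset 𝕜) {x : ℝ} (hx : 0 ≤ x) (N : ℕ) :
    ∑ l ∈ Finset.range N, ‖(s.map fun w => X - C w).prod.coeff l‖ * x ^ l ≤
      (s.map fun w => x + ‖w‖).prod := by
  induction s using Multiset.induction_on generalizing N with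
  | empty => cases N <;> simp [Finset.sum_range_succ', coeff_one]
  | cons w s ih =>
    simp only [Multiset.map_cons, Multiset.prod_cons]
    set q := (s.map fun w => X - C w).prod
    have hXq : ∑ l ∈ Finset.range N, ‖(X * q).coeff l‖ * x ^ l ≤
        x * (s.map fun w => x + ‖w‖).prod := by
      rcases N with _ | N
      · simpa using mul_nonneg hx (by simpa using ih 0)
      · calc ∑ l ∈ Finset.range (N + 1), ‖(X * q).coeff l‖ * x ^ l
            = x * ∑ l ∈ Finset.range N, ‖q.coeff l‖ * x ^ l := by
              rw [Finset.sum_range_succ', Finset.mul_sum]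
              simp only [coeff_X_mul, coeff_X_mul_zero, norm_zero, zero_mul, add_zero]
              exact Finset.sum_congr rfl fun l _ => by ring
          _ ≤ _ := mul_le_mul_of_nonneg_left (ih N) hx
    calc ∑ l ∈ Finset.range N, ‖((X - C w) * q).coeff l‖ * x ^ l
        ≤ ∑ l ∈ Finset.range N, (‖(X * q).coeff l‖ * x ^ l + ‖w‖ * (‖q.coeff l‖ * x ^ l)) := by
          refine Finset.sum_le_sum fun l _ => ?_
          rw [sub_mul, coeff_sub, coeff_C_mul, ← mul_assoc, ← add_mul, ← norm_mul]
          gcongr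
          exact norm_sub_le _ _
      _ ≤ _ := by
          rw [Finset.sum_add_distrib, ← Finset.mul_sum, add_mul]
          gcongr
          exact ih N

theorem norm_eval_eq_of_splits {P : 𝕜[X]} (hP : P.Splits) (v : 𝕜) :
    ‖P.eval v‖ = ‖P.leadingCoeff‖ * (P.roots.map fun w => ‖v - w‖).prod := by
  rw [hP.eval_eq_prod_roots, norm_mul]
  simpa [Multiset.map_map, Function.comp_def] using
    congrArg (‖P.leadingCoeff‖ * ·) (map_multiset_prod (normHom : 𝕜 →*₀ ℝ) (P.roots.map (v - ·)))

theorem sum_norm_coeff_mul_pow_le_of_splits {P : 𝕜[X]} (hP : P.Splits) {x : ℝ} (hx : 0 ≤ x)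
    (N : ℕ) :
    ∑ l ∈ Finset.range N, ‖P.coeff l‖ * x ^ l ≤
      ‖P.leadingCoeff‖ * (P.roots.map fun w => x + ‖w‖).prod := by
  calc ∑ l ∈ Finset.range N, ‖P.coeff l‖ * x ^ l
      = ‖P.leadingCoeff‖ *
          ∑ l ∈ Finset.range N, ‖(P.roots.map fun w => X - C w).prod.coeff l‖ * x ^ l := by
        rw [Finset.mul_sum]
        refine Finset.sum_congr rfl fun l _ => ?_
        conv_lhs => rw [hP.eq_prod_roots]
        rw [coeff_C_mul, norm_mul, mul_assoc]
    _ ≤ _ := by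
        gcongr
        exact sum_norm_coeff_prod_X_sub_C_mul_pow_le _ hx _

theorem norm_eval_sub_eval_le {P₀ P₁ : 𝕜[X]} {ε : ℝ}
    (hc : ∀ l, ‖P₁.coeff l - P₀.coeff l‖ ≤ ε * ‖P₀.coeff l‖) (v : 𝕜) :
    ‖P₁.eval v - P₀.eval v‖ ≤
      ε * ∑ l ∈ Finset.range (P₀.natDegree + 1), ‖P₀.coeff l‖ * ‖v‖ ^ l := by
  have hdeg : P₁.natDegree < P₀.natDegree + 1 := by
    rw [Nat.lt_succ_iff, natDegree_le_iff_coeff_eq_zero]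
    intro l hl
    simpa [coeff_eq_zero_of_natDegree_lt hl] using hc l
  rw [eval_eq_sum_range' hdeg, eval_eq_sum_range, ← Finset.sum_sub_distrib, Finset.mul_sum]
  refine (norm_sum_le _ _).trans (Finset.sum_le_sum fun l _ => ?_)
  rw [← sub_mul, norm_mul, norm_pow, ← mul_assoc]
  gcongr
  exact hc l

theorem mul_prod_le_norm_eval_of_splits {P : 𝕜[X]} (hP : P.Splits) {v : 𝕜} {c : ℝ} (hc : 0 ≤ c)
    (hfar : ∀ w, P.IsRoot w → c * (‖v‖ + ‖w‖) ≤ ‖v - w‖) :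
    c ^ P.natDegree * (‖P.leadingCoeff‖ * (P.roots.map fun w => ‖v‖ + ‖w‖).prod) ≤ ‖P.eval v‖ := by
  have hprod : c ^ P.natDegree * (P.roots.map fun w => ‖v‖ + ‖w‖).prod ≤
      (P.roots.map fun w => ‖v - w‖).prod := by
    rw [hP.natDegree_eq_card_roots, ← Multiset.prod_replicate, ← Multiset.map_const',
      ← Multiset.prod_map_mul]
    exact Multiset.prod_map_le_prod_map₀ _ _ (fun w _ => by positivity)
      fun w hw => hfar w (isRoot_of_mem_roots hw)
  rw [norm_eval_eq_of_splits hP, mul_left_comm]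
  gcongr

theorem exists_near_root {P₀ P₁ : 𝕜[X]} (hP₀ : P₀.Splits) (hne : P₀ ≠ 0) {n : ℕ}
    (hn : P₀.natDegree ≤ n) {ε : ℝ} (hε : ε * 3 ^ n < 1)
    (hc : ∀ l, ‖P₁.coeff l - P₀.coeff l‖ ≤ ε * ‖P₀.coeff l‖) {v : 𝕜} (hv : P₁.eval v = 0) :
    ∃ w, P₀.IsRoot w ∧ ‖v - w‖ ≤ 1 / 3 * (‖v‖ + ‖w‖) := by
  by_contra! hfar
  have hlc : 0 < ‖P₀.leadingCoeff‖ := norm_pos_iff.2 (leadingCoeff_ne_zero.2 hne)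
  have hε₀ : 0 ≤ ε := nonneg_of_mul_nonneg_left ((norm_nonneg _).trans (hc P₀.natDegree)) hlc
  set M := (P₀.roots.map fun w => ‖v‖ + ‖w‖).prod
  have hM : 0 < M := by
    refine Multiset.prod_pos fun x hx => ?_
    obtain ⟨w, hw, rfl⟩ := Multiset.mem_map.1 hx
    linarith [hfar w (isRoot_of_mem_roots hw), norm_sub_le v w]
  have hle : (1 / 3) ^ P₀.natDegree ≤ ε := by
    refine le_of_mul_le_mul_right ?_ (mul_pos hlc hM)
    calc (1 / 3) ^ P₀.natDegree * (‖P₀.leadingCoeff‖ * M) ≤ ‖P₀.eval v‖ :=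
          mul_prod_le_norm_eval_of_splits hP₀ (by norm_num) fun w hw => (hfar w hw).le
      _ = ‖P₁.eval v - P₀.eval v‖ := by rw [hv, zero_sub, norm_neg]
      _ ≤ ε * ∑ l ∈ Finset.range (P₀.natDegree + 1), ‖P₀.coeff l‖ * ‖v‖ ^ l :=
        norm_eval_sub_eval_le hc v
      _ ≤ ε * (‖P₀.leadingCoeff‖ * M) := by
        gcongr
        exact sum_norm_coeff_mul_pow_le_of_splits hP₀ (norm_nonneg v) _
  refine hε.not_ge ?_
  calc (1 : ℝ) = (1 / 3) ^ P₀.natDegree * 3 ^ P₀.natDegree := by simp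
    _ ≤ ε * 3 ^ n := by gcongr; norm_num

end NearRoots

section PreconnectedSet

variable {X : Type*} [TopologicalSpace X] {S : Set X}

theorem le_five_pow_card_mul (hS : IsPreconnected S) {f : X → ℝ} (hf : ContinuousOn f S)
    {T : Finset ℝ} (hT : ∀ τ ∈ S, ∃ x ∈ T, x ≤ 2 * f τ ∧ f τ ≤ 2 * x) {τ τ' : X} (hτ : τ ∈ S)
    (hτ' : τ' ∈ S) : f τ ≤ 5 ^ T.card * f τ' := by
  by_contra! hlt
  have hτ'0 : 0 ≤ f τ' := by
    obtain ⟨x, -, hx, hx'⟩ := hT τ' hτ'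
    linarith
  have hb : 0 < f τ := lt_of_le_of_lt (by positivity) hlt
  have hlevel : ∀ k ∈ Finset.range (T.card + 1),
      ∃ x ∈ T, x ≤ 2 * (f τ / 5 ^ k) ∧ f τ / 5 ^ k ≤ 2 * x := by
    intro k hk
    have hmem : f τ / 5 ^ k ∈ Icc (f τ') (f τ) := by
      refine ⟨?_, div_le_self hb.le (one_le_pow₀ (by norm_num))⟩
      rw [le_div_iff₀ (by positivity), mul_comm]
      refine le_trans ?_ hlt.le
      gcongr
      · norm_num
      · exact Finset.mem_range_succ_iff.1 hk
    obtain ⟨σ, hσ, hσk⟩ := hS.intermediate_value hτ' hτ hf hmem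
    exact hσk ▸ hT σ hσ
  choose! x hxT hx hx' using hlevel
  have hanti : StrictAntiOn x (Finset.range (T.card + 1)) := by
    intro j hj k hk hjk
    have hpow : f τ / 5 ^ k ≤ f τ / 5 ^ j / 5 := by
      rw [div_div, ← pow_succ]
      gcongr
      · norm_num
      · exact hjk
    have : 0 < f τ / 5 ^ j := by positivity
    linarith [hx k hk, hx' j hj]
  simpa using Finset.card_le_card_of_injOn x hxT hanti.injOn

theorem norm_le_of_near_roots {𝕜 : Type*} [NormedField 𝕜] (hS : IsPreconnected S) {P : 𝕜[X]}
    (hP : P ≠ 0) {u : X → 𝕜} (hu : ContinuousOn u S)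
    (hnear : ∀ τ ∈ S, ∃ w, P.IsRoot w ∧ ‖u τ - w‖ ≤ 1 / 3 * (‖u τ‖ + ‖w‖)) {τ τ' : X} (hτ : τ ∈ S)
    (hτ' : τ' ∈ S) : ‖u τ‖ ≤ 5 ^ P.natDegree * ‖u τ'‖ := by
  classical
  have hcard : (P.roots.toFinset.image fun w => ‖w‖).card ≤ P.natDegree :=
    Finset.card_image_le.trans ((Multiset.toFinset_card_le _).trans (card_roots' P))
  calc ‖u τ‖ ≤ 5 ^ (P.roots.toFinset.image fun w => ‖w‖).card * ‖u τ'‖ := by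
        refine le_five_pow_card_mul hS hu.norm (fun σ hσ => ?_) hτ hτ'
        obtain ⟨w, hw, hdist⟩ := hnear σ hσ
        refine ⟨‖w‖, Finset.mem_image_of_mem _ (by simpa [hP] using hw), ?_, ?_⟩
        · linarith [norm_sub_norm_le w (u σ), norm_sub_rev w (u σ)]
        · linarith [norm_sub_norm_le (u σ) w]
    _ ≤ _ := by gcongr; norm_num

end PreconnectedSet

/-! ### Steady functions -/

theorem mapsTo_ofReal_mul_ball {r : ℝ} (hr : 0 < r) :
    MapsTo (fun τ : ℂ => (r : ℂ) * τ) (ball 0 1) (ball 0 r) := fun τ hτ => by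
  rw [mem_ball_zero_iff] at hτ ⊢
  rw [norm_mul, Complex.norm_real, Real.norm_eq_abs, abs_of_pos hr]
  exact mul_lt_of_lt_one_right hr hτ

/-- A holomorphic function on the disc of radius `r` around `0` whose relative deviation from its
value at `0` is at most `K`. -/
structure Steady (r K : ℝ) (e : ℂ → ℂ) : Prop where
  diff : DifferentiableOn ℂ e (ball 0 r)
  bound : ∀ τ ∈ ball (0 : ℂ) r, ‖e τ - e 0‖ ≤ K * ‖e 0‖

namespace Steady

variable {r r' K K' : ℝ} {e f : ℂ → ℂ}

theorem mono (h : Steady r K e) (hr : r' ≤ r) (hK : K ≤ K') : Steady r' K' e :=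
  ⟨h.diff.mono (ball_subset_ball hr), fun τ hτ => (h.bound τ (ball_subset_ball hr hτ)).trans
    (mul_le_mul_of_nonneg_right hK (norm_nonneg _))⟩

theorem congr (h : Steady r K e) (hr : 0 < r) (hf : EqOn f e (ball 0 r)) : Steady r K f :=
  ⟨h.diff.congr hf, fun τ hτ => by rw [hf hτ, hf (mem_ball_self hr)]; exact h.bound τ hτ⟩

theorem const (r : ℝ) (c : ℂ) : Steady r 0 fun _ => c :=
  ⟨differentiableOn_const c, fun τ _ => by simp⟩

theorem zero (r K : ℝ) : Steady r K fun _ => 0 :=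
  ⟨differentiableOn_const 0, fun τ _ => by simp⟩

theorem neg (h : Steady r K e) : Steady r K fun τ => -e τ :=
  ⟨h.diff.neg, fun τ hτ => by
    rw [← neg_sub', norm_neg, norm_neg]
    exact h.bound τ hτ⟩

theorem norm_sub_le (h : Steady r K e) {τ : ℂ} (hτ : τ ∈ ball (0 : ℂ) r) :
    ‖e τ - e 0‖ ≤ K * (‖τ‖ / r) * ‖e 0‖ := by
  have hschwarz := Complex.dist_le_div_mul_dist_of_mapsTo_ball (R₂ := K * ‖e 0‖) h.diff
    (fun σ hσ => by rw [mem_closedBall, dist_eq_norm]; exact h.bound σ hσ) hτ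
  rw [dist_eq_norm, dist_zero_right] at hschwarz
  exact hschwarz.trans_eq (by ring)

theorem shrink (h : Steady r K e) (hr : 0 < r) (hK : 0 ≤ K) {s : ℝ} (hs : s ≤ 1) :
    Steady (s * r) (s * K) e := by
  have hsr : s * r ≤ r := mul_le_of_le_one_left hr.le hs
  refine ⟨h.diff.mono (ball_subset_ball hsr), fun τ hτ => ?_⟩
  refine (h.norm_sub_le (ball_subset_ball hsr hτ)).trans ?_
  have : ‖τ‖ / r ≤ s := (div_le_iff₀ hr).2 (mem_ball_zero_iff.1 hτ).le
  rw [mul_comm s]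
  gcongr

theorem one_half (h : Steady r K e) (hr : 0 < r) (hK : 1 ≤ K) :
    Steady ((2 * K)⁻¹ * r) (1 / 2) e := by
  have hK0 : 0 < K := one_pos.trans_le hK
  have hshrink := h.shrink hr hK0.le (s := (2 * K)⁻¹) (inv_le_one_of_one_le₀ (by linarith))
  have hhalf : (2 * K)⁻¹ * K = 1 / 2 := by field_simp
  rwa [hhalf] at hshrink

theorem norm_second_diff_le (h : Steady r K e) {τ : ℂ} (hτ : τ ∈ ball (0 : ℂ) r) :
    ‖e τ + e (-τ) - 2 * e 0‖ ≤ 2 * K * (‖τ‖ / r) ^ 2 * ‖e 0‖ := by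
  have hr : 0 < r := pos_of_mem_ball hτ
  have hneg : MapsTo (fun τ : ℂ => -τ) (ball 0 r) (ball 0 r) := fun σ hσ => by simpa using hσ
  let E : ℂ → ℂ := fun σ => e σ + e (-σ)
  have hE : DifferentiableOn ℂ E (ball 0 r) :=
    h.diff.add (h.diff.comp differentiable_neg.differentiableOn hneg)
  have hE0 : E 0 = 2 * e 0 := by simp [E, two_mul]
  have hdE : HasDerivAt E 0 0 := by
    have hd : HasDerivAt e (deriv e 0) 0 :=
      (h.diff.differentiableAt (ball_mem_nhds 0 hr)).hasDerivAt
    have hd' : HasDerivAt e (deriv e 0) (-0) := by simpa using hd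
    simpa using! hd.add (hd'.comp (0 : ℂ) (hasDerivAt_neg (0 : ℂ)))
  have hlit : (E · - E 0) =o[𝓝 0] (fun w : ℂ => ‖w - 0‖ ^ 1) := by
    simpa using hdE.isLittleO.norm_right
  have hmaps : MapsTo E (ball 0 r) (closedBall (E 0) (2 * K * ‖e 0‖)) := by
    intro σ hσ
    rw [mem_closedBall, dist_eq_norm, hE0]
    calc ‖e σ + e (-σ) - 2 * e 0‖ = ‖(e σ - e 0) + (e (-σ) - e 0)‖ := by ring_nf
      _ ≤ ‖e σ - e 0‖ + ‖e (-σ) - e 0‖ := norm_add_le _ _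
      _ ≤ _ := by linarith [h.bound σ hσ, h.bound (-σ) (hneg hσ)]
  have hschwarz := Complex.dist_le_mul_div_pow_of_mapsTo_ball_of_isLittleO hE hmaps hlit hτ
  rw [dist_eq_norm, dist_zero_right, hE0] at hschwarz
  exact hschwarz.trans_eq (by ring)

theorem mul (he : Steady r K e) (hf : Steady r K' f) :
    Steady r ((1 + K) * (1 + K') - 1) fun τ => e τ * f τ := by
  refine ⟨he.diff.mul hf.diff, fun τ hτ => ?_⟩
  have he' := he.bound τ hτ
  have hf' := hf.bound τ hτ
  calc ‖e τ * f τ - e 0 * f 0‖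
      = ‖(e τ - e 0) * (f τ - f 0) + e 0 * (f τ - f 0) + (e τ - e 0) * f 0‖ := by ring_nf
    _ ≤ ‖(e τ - e 0) * (f τ - f 0)‖ + ‖e 0 * (f τ - f 0)‖ + ‖(e τ - e 0) * f 0‖ := norm_add₃_le
    _ = ‖e τ - e 0‖ * ‖f τ - f 0‖ + ‖e 0‖ * ‖f τ - f 0‖ + ‖e τ - e 0‖ * ‖f 0‖ := by
      simp only [norm_mul]
    _ ≤ (K * ‖e 0‖) * (K' * ‖f 0‖) + ‖e 0‖ * (K' * ‖f 0‖) + (K * ‖e 0‖) * ‖f 0‖ := by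
      gcongr
      exact (norm_nonneg _).trans he'
    _ = _ := by rw [norm_mul]; ring

theorem pow (he : Steady r K e) (n : ℕ) : Steady r ((1 + K) ^ n - 1) fun τ => e τ ^ n := by
  induction n with
  | zero => simpa using Steady.const r 1
  | succ n ih =>
    have := ih.mul he
    simpa [pow_succ] using this

theorem mul_pow (he : Steady r K e) (hf : Steady r K f) (n : ℕ) :
    Steady r ((1 + K) ^ (n + 1) - 1) fun τ => e τ * f τ ^ n := by
  convert he.mul (hf.pow n) using 1
  ring

theorem of_root {P : ℂ → ℂ[X]} {ε : ℝ} {n : ℕ} (hr : 0 < r) (hP : P 0 ≠ 0)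
    (hn : (P 0).natDegree ≤ n) (hε : ε * 3 ^ n < 1)
    (hc : ∀ l, Steady r ε fun τ => (P τ).coeff l) {u : ℂ → ℂ} (hu : DifferentiableOn ℂ u (ball 0 r))
    (hroot : ∀ τ ∈ ball (0 : ℂ) r, (P τ).eval (u τ) = 0) :
    Steady r (1 + 5 ^ n) u := by
  refine ⟨hu, fun τ hτ => ?_⟩
  have hle : ‖u τ‖ ≤ 5 ^ n * ‖u 0‖ := by
    calc ‖u τ‖ ≤ 5 ^ (P 0).natDegree * ‖u 0‖ :=
          norm_le_of_near_roots (convex_ball (0 : ℂ) r).isPreconnected hP hu.continuousOn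
            (fun σ hσ => exists_near_root (IsAlgClosed.splits _) hP hn hε
              (fun l => (hc l).bound σ hσ) (hroot σ hσ)) hτ (mem_ball_self hr)
      _ ≤ 5 ^ n * ‖u 0‖ := by gcongr; norm_num
  linarith [_root_.norm_sub_le (u τ) (u 0)]

theorem eq_zero (h : Steady r K e) (he : e 0 = 0) {τ : ℂ} (hτ : τ ∈ ball (0 : ℂ) r) : e τ = 0 := by
  simpa [he] using h.bound τ hτ

theorem comp_mul (h : Steady r K e) (hr : 0 < r) : Steady 1 K fun τ => e (r * τ) := by
  have hmaps := mapsTo_ofReal_mul_ball hr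
  refine ⟨h.diff.comp (differentiable_id.const_mul _).differentiableOn hmaps, fun τ hτ => ?_⟩
  rw [mul_zero]
  exact h.bound _ (hmaps hτ)

end Steady

theorem exists_dvd_pow_mul_comp {R : Type*} [CommRing R] [IsDomain R] {q : R[X]} (hq : q ≠ 0)
    (p : R[X]) : ∃ (N : R[X]) (j : ℕ), N.coeff 0 ≠ 0 ∧ q ∣ p ^ j * N.comp p := by
  have hroot : IsAlgebraic R (AdjoinRoot.root q) := ⟨q, hq, by simp⟩
  have hp : IsAlgebraic R (AdjoinRoot.mk q p) := by
    rw [← AdjoinRoot.aeval_eq]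
    induction p using Polynomial.induction_on' with
    | add p₁ p₂ h₁ h₂ => rw [map_add]; exact h₁.add h₂
    | monomial n a =>
      rw [aeval_monomial]
      exact (isAlgebraic_algebraMap a).mul (hroot.pow n)
  obtain ⟨M, hM, hMp⟩ := hp
  obtain ⟨N, hN, hdvd⟩ := exists_eq_pow_rootMultiplicity_mul_and_not_dvd M hM 0
  rw [C_0, sub_zero] at hN hdvd
  refine ⟨N, rootMultiplicity 0 M, fun h => hdvd (X_dvd_iff.2 h), AdjoinRoot.mk_eq_zero.1 ?_⟩
  calc AdjoinRoot.mk q (p ^ rootMultiplicity 0 M * N.comp p)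
      = AdjoinRoot.mk q (M.comp p) := by
        conv_rhs => rw [hN, mul_comp, pow_comp, X_comp]
    _ = 0 := by rw [← hMp, ← AdjoinRoot.aeval_eq p, ← aeval_comp, AdjoinRoot.aeval_eq]

section CoefficientBounds

theorem exists_sum_abs_coeff_le_of_infinite {s : Set ℝ} (hs : s.Infinite) (n : ℕ) :
    ∃ C : ℝ, 0 ≤ C ∧ ∀ p : ℝ[X], p.natDegree ≤ n → ∀ b, (∀ x ∈ s, |p.eval x| ≤ b) →
      ∑ k ∈ Finset.range (n + 1), |p.coeff k| ≤ C * b := by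
  set x : Fin (n + 1) → ℝ := fun i => hs.natEmbedding s i
  have hx : Function.Injective x :=
    Subtype.val_injective.comp ((hs.natEmbedding s).injective.comp Fin.val_injective)
  have hker : LinearMap.ker (Matrix.vandermonde x).mulVecLin = ⊥ := by
    rw [LinearMap.ker_eq_bot, Matrix.coe_mulVecLin, Matrix.mulVec_injective_iff_isUnit,
      Matrix.isUnit_iff_isUnit_det]
    exact (Matrix.det_vandermonde_ne_zero_iff.2 hx).isUnit
  obtain ⟨K, -, hK⟩ := LinearMap.exists_antilipschitzWith _ hker
  refine ⟨(n + 1) * K, by positivity, fun p hp b hb => ?_⟩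
  set c : Fin (n + 1) → ℝ := fun k => p.coeff k
  have heval : ∀ i, (Matrix.vandermonde x).mulVecLin c i = p.eval (x i) := by
    intro i
    rw [eval_eq_sum_range' (Nat.lt_succ_of_le hp), Matrix.mulVecLin_apply, Matrix.mulVec,
      dotProduct, ← Fin.sum_univ_eq_sum_range (fun k => p.coeff k * x i ^ k)]
    simp [c, Matrix.vandermonde_apply, mul_comm]
  have hbx : ∀ i, |p.eval (x i)| ≤ b := fun i => hb _ (hs.natEmbedding s i).2
  have hc : ‖c‖ ≤ K * b := by
    refine (hK.le_mul_norm (map_zero _) c).trans ?_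
    gcongr
    refine (pi_norm_le_iff_of_nonneg ((abs_nonneg _).trans (hbx 0))).2 fun i => ?_
    rw [heval]
    exact hbx i
  calc ∑ k ∈ Finset.range (n + 1), |p.coeff k| ≤ ∑ _k ∈ Finset.range (n + 1), K * b :=
        Finset.sum_le_sum fun k hk => (norm_le_pi_norm c ⟨k, Finset.mem_range.1 hk⟩).trans hc
    _ = _ := by simp [mul_assoc]

theorem exists_sum_abs_coeff_le_abs_eval_one (n : ℕ) :
    ∃ C : ℝ, 0 ≤ C ∧ ∀ p : ℝ[X], p.natDegree ≤ n →
      (MonotoneOn (fun x => |p.eval x|) (Ioo 0 2) ∨ AntitoneOn (fun x => |p.eval x|) (Ioo 0 2)) →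
      ∑ k ∈ Finset.range (n + 1), |p.coeff k| ≤ C * |p.eval 1| := by
  obtain ⟨C₁, hC₁, h₁⟩ :=
    exists_sum_abs_coeff_le_of_infinite (Ioc_infinite (zero_lt_one : (0 : ℝ) < 1)) n
  obtain ⟨C₂, -, h₂⟩ :=
    exists_sum_abs_coeff_le_of_infinite (Ico_infinite (one_lt_two : (1 : ℝ) < 2)) n
  have hone : (1 : ℝ) ∈ Ioo (0 : ℝ) 2 := by norm_num
  refine ⟨max C₁ C₂, le_max_of_le_left hC₁, fun p hp => ?_⟩
  rintro (hmono | hanti)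
  · refine (h₁ p hp _ fun x hx => hmono ⟨hx.1, hx.2.trans_lt one_lt_two⟩ hone hx.2).trans ?_
    gcongr
    exact le_max_left _ _
  · refine (h₂ p hp _ fun x hx => hanti hone ⟨one_pos.trans_le hx.1, hx.2⟩ hx.1).trans ?_
    gcongr
    exact le_max_right _ _

theorem monotoneOn_or_antitoneOn_abs_eval {p : ℝ[X]} {s : Set ℝ} (hs : Convex ℝ s)
    (hp : ∀ x ∈ s, p.eval x ≠ 0) (hp' : ∀ x ∈ s, (derivative p).eval x ≠ 0) :
    MonotoneOn (fun x => |p.eval x|) s ∨ AntitoneOn (fun x => |p.eval x|) s := by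
  have hderiv : ∀ x, HasDerivAt (fun t => p.eval t ^ 2) (2 * p.eval x * (derivative p).eval x) x :=
    fun x => by simpa using! (p.hasDerivAt x).pow 2
  have hdiff : DifferentiableOn ℝ (fun t => p.eval t ^ 2) (interior s) := fun x _ =>
    (hderiv x).differentiableAt.differentiableWithinAt
  have hsign : (∀ x ∈ s, 0 ≤ 2 * p.eval x * (derivative p).eval x) ∨
      ∀ x ∈ s, 2 * p.eval x * (derivative p).eval x ≤ 0 := by
    by_contra! hcon
    obtain ⟨⟨u, hu, hu0⟩, v, hv, hv0⟩ := hcon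
    obtain ⟨x, hx, hx0⟩ := hs.isPreconnected.intermediate_value hu hv
      (f := fun x => 2 * p.eval x * (derivative p).eval x) (by fun_prop) ⟨hu0.le, hv0.le⟩
    exact mul_ne_zero (mul_ne_zero two_ne_zero (hp x hx)) (hp' x hx) hx0
  refine hsign.imp (fun hnonneg x hx y hy hxy => ?_) fun hnonpos x hx y hy hxy => ?_
  · exact sq_le_sq.1 (monotoneOn_of_deriv_nonneg hs (by fun_prop) hdiff
      (fun z hz => (hderiv z).deriv ▸ hnonneg z (interior_subset hz)) hx hy hxy)
  · exact sq_le_sq.1 (antitoneOn_of_deriv_nonpos hs (by fun_prop) hdiff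
      (fun z hz => (hderiv z).deriv ▸ hnonpos z (interior_subset hz)) hx hy hxy)

end CoefficientBounds

theorem exists_consecutive {α : Type*} [LinearOrder α] {A : Finset α} {l u : α} (hl : l ∈ A)
    (hu : u ∈ A) (hA : ∀ x ∈ A, x ∈ Icc l u) :
    ∃ (M : ℕ) (a : ℕ → α), a 0 = l ∧ a M = u ∧ (∀ i, a i ∈ A) ∧
      ∀ i < M, a i < a (i + 1) ∧ ∀ x ∈ Ioo (a i) (a (i + 1)), x ∉ A := by
  obtain ⟨M, hM⟩ : ∃ M, A.card = M + 1 :=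
    Nat.exists_eq_succ_of_ne_zero (Finset.card_ne_zero_of_mem hl)
  set o := A.orderEmbOfFin hM
  have hmem : ∀ i, o i ∈ A := Finset.orderEmbOfFin_mem A hM
  have hsurj : ∀ x ∈ A, ∃ i, o i = x := fun x hx => by
    rwa [← Finset.mem_coe, ← Finset.range_orderEmbOfFin A hM] at hx
  refine ⟨M, fun i => o ⟨min i M, by omega⟩, ?_, ?_, fun i => hmem _, fun i hi => ⟨?_, ?_⟩⟩
  · obtain ⟨i, hi⟩ := hsurj l hl
    exact le_antisymm (hi ▸ o.monotone (by simp)) (hA _ (hmem _)).1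
  · obtain ⟨i, hi⟩ := hsurj u hu
    refine le_antisymm (hA _ (hmem _)).2 (hi ▸ o.monotone ?_)
    simpa [Fin.le_def] using Nat.lt_succ_iff.1 i.2
  · exact o.strictMono (Fin.lt_def.2 (by simp only; omega))
  · rintro x ⟨hx₁, hx₂⟩ hx
    obtain ⟨j, rfl⟩ := hsurj x hx
    have hj₁ := Fin.lt_def.1 (o.lt_iff_lt.1 hx₁)
    have hj₂ := Fin.lt_def.1 (o.lt_iff_lt.1 hx₂)
    simp only at hj₁ hj₂
    omega

/-! ### Holomorphic families of polynomials -/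

section HoloFamily

/-- A family of ring homomorphisms to `ℂ` depending holomorphically on a parameter in the unit
disc, compatible with complex conjugation, and equal to `ψ₀` at the origin. -/
structure IsHoloFamily {R : Type*} [CommRing R] (ψ : ℂ → R →+* ℂ) (ψ₀ : R →+* ℝ) : Prop where
  diff : ∀ a, DifferentiableOn ℂ (fun τ => ψ τ a) (ball 0 1)
  map_conj : ∀ a, ∀ τ ∈ ball (0 : ℂ) 1, ψ (conj τ) a = conj (ψ τ a)
  at_zero : ∀ a, ψ 0 a = ψ₀ a

/-- A holomorphic function on the disc of radius `r`, compatible with complex conjugation, whose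
value at each parameter is a root of the corresponding polynomial of the family `q.map (ψ τ)`. -/
structure IsRootSection {R : Type*} [CommRing R] (ψ : ℂ → R →+* ℂ) (q : R[X]) (r : ℝ)
    (θ : ℂ → ℂ) : Prop where
  diff : DifferentiableOn ℂ θ (ball 0 r)
  map_conj : ∀ τ ∈ ball (0 : ℂ) r, θ (conj τ) = conj (θ τ)
  root : ∀ τ ∈ ball (0 : ℂ) r, (q.map (ψ τ)).eval (θ τ) = 0

/-- The pairs of a parameter in the closed disc of radius `r` and a simple root of the
corresponding polynomial of the family `q.map (ψ τ)`. -/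
def simpleRoots {R : Type*} [CommRing R] (ψ : ℂ → R →+* ℂ) (q : R[X]) (r : ℝ) : Set (ℂ × ℂ) :=
  {x | x.1 ∈ closedBall 0 r ∧ (q.map (ψ x.1)).eval x.2 = 0 ∧
    ((derivative q).map (ψ x.1)).eval x.2 ≠ 0}

theorem pow_mul_eval_map_eq_zero_of_dvd {R S : Type*} [CommRing R] [CommRing S] {q p N : R[X]}
    {j : ℕ} (hdvd : q ∣ p ^ j * N.comp p) (φ : R →+* S) {s : S} (hs : (q.map φ).eval s = 0) :
    (p.map φ).eval s ^ j * (N.map φ).eval ((p.map φ).eval s) = 0 := by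
  have h := eval_dvd (x := s) (Polynomial.map_dvd φ hdvd)
  rwa [hs, zero_dvd_iff, Polynomial.map_mul, Polynomial.map_pow, Polynomial.map_comp, eval_mul,
    eval_pow, eval_comp] at h

variable {R : Type*} [CommRing R] {ψ : ℂ → R →+* ℂ} {ψ₀ : R →+* ℝ}

namespace IsHoloFamily

theorem contDiffAt_eval (hψ : IsHoloFamily ψ ψ₀) (p : R[X]) {x : ℂ × ℂ}
    (hx : x.1 ∈ ball (0 : ℂ) 1) :
    ContDiffAt ℂ 1 (fun y : ℂ × ℂ => (p.map (ψ y.1)).eval y.2) x := by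
  simp only [eval_map, eval₂_eq_sum_range]
  refine ContDiffAt.sum fun l _ => ContDiffAt.mul ?_ (contDiffAt_snd.pow l)
  have hcoeff : ContDiffAt ℂ 1 (fun τ => ψ τ (p.coeff l)) x.1 :=
    ((hψ.diff (p.coeff l)).analyticAt (isOpen_ball.mem_nhds hx)).contDiffAt
  exact ContDiffAt.comp (f := Prod.fst) (g := fun τ => ψ τ (p.coeff l)) x hcoeff contDiffAt_fst

theorem differentiableOn_eval (hψ : IsHoloFamily ψ ψ₀) (p : R[X]) {r : ℝ} (hr : r ≤ 1)
    {θ : ℂ → ℂ} (hθ : DifferentiableOn ℂ θ (ball 0 r)) :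
    DifferentiableOn ℂ (fun τ => (p.map (ψ τ)).eval (θ τ)) (ball 0 r) := by
  simp only [eval_map, eval₂_eq_sum_range]
  exact DifferentiableOn.fun_sum fun l _ =>
    ((hψ.diff _).mono (ball_subset_ball hr)).mul (hθ.pow l)

theorem eval_conj (hψ : IsHoloFamily ψ ψ₀) (p : R[X]) {τ : ℂ} (hτ : τ ∈ ball (0 : ℂ) 1) (s : ℂ) :
    (p.map (ψ (conj τ))).eval (conj s) = conj ((p.map (ψ τ)).eval s) := by
  simp only [eval_map, eval₂_eq_sum_range, map_sum, map_mul, map_pow, hψ.map_conj _ τ hτ]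

theorem map_zero_eq (hψ : IsHoloFamily ψ ψ₀) (p : R[X]) :
    p.map (ψ 0) = (p.map ψ₀).map Complex.ofRealHom := by
  ext l
  simp [coeff_map, hψ.at_zero]

theorem map_zero_ne_zero (hψ : IsHoloFamily ψ ψ₀) {p : R[X]} (hp : p.map ψ₀ ≠ 0) :
    p.map (ψ 0) ≠ 0 := by
  rw [hψ.map_zero_eq]
  exact (Polynomial.map_ne_zero_iff Complex.ofRealHom.injective).2 hp

theorem eval_zero_eq (hψ : IsHoloFamily ψ ψ₀) (p : R[X]) (a : ℝ) :
    (p.map (ψ 0)).eval (a : ℂ) = ((p.map ψ₀).eval a : ℝ) := by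
  rw [hψ.map_zero_eq]
  exact eval_map_apply Complex.ofRealHom a

theorem exists_forall_norm_le_of_root (hψ : IsHoloFamily ψ ψ₀) {q : R[X]} (hq : q.map ψ₀ ≠ 0)
    {n : ℕ} (hn : q.natDegree ≤ n) {r ε : ℝ} (hε : ε * 3 ^ n < 1)
    (hqc : ∀ l, Steady r ε fun τ => ψ τ (q.coeff l)) :
    ∃ B, ∀ τ ∈ ball (0 : ℂ) r, ∀ s, (q.map (ψ τ)).eval s = 0 → ‖s‖ ≤ B := by
  have hq0 := hψ.map_zero_ne_zero hq
  refine ⟨2 * ((q.map (ψ 0)).roots.map fun w => ‖w‖).sum, fun τ hτ s hs => ?_⟩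
  obtain ⟨w, hw, hdist⟩ := exists_near_root (IsAlgClosed.splits _) hq0
    (natDegree_map_le.trans hn) hε (fun l => by simpa only [coeff_map] using (hqc l).bound τ hτ) hs
  have hle : ‖w‖ ≤ ((q.map (ψ 0)).roots.map fun w => ‖w‖).sum :=
    Multiset.single_le_sum (Multiset.forall_mem_map_iff.2 fun _ _ => norm_nonneg _) _
      (Multiset.mem_map_of_mem _ ((mem_roots hq0).2 hw))
  linarith [norm_sub_norm_le s w]

theorem isCompact_simpleRoots (hψ : IsHoloFamily ψ ψ₀) {q N : R[X]} {j : ℕ}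
    (hdvd : q ∣ derivative q ^ j * N.comp (derivative q)) {r B : ℝ} (hr : r < 1)
    (hN : ∀ τ ∈ closedBall (0 : ℂ) r, ψ τ (N.coeff 0) ≠ 0)
    (hB : ∀ τ ∈ closedBall (0 : ℂ) r, ∀ s, (q.map (ψ τ)).eval s = 0 → ‖s‖ ≤ B) :
    IsCompact (simpleRoots ψ q r) := by
  let F : ℂ × ℂ → ℂ := fun x => (q.map (ψ x.1)).eval x.2
  let D : ℂ × ℂ → ℂ := fun x => ((derivative q).map (ψ x.1)).eval x.2
  let T : ℂ × ℂ → ℂ := fun x => (N.map (ψ x.1)).eval (D x)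
  let K : Set (ℂ × ℂ) := closedBall 0 r ×ˢ closedBall 0 B
  have hK : IsCompact K := (isCompact_closedBall _ _).prod (isCompact_closedBall _ _)
  have hK1 : ∀ x ∈ K, x.1 ∈ ball (0 : ℂ) 1 := fun x hx => closedBall_subset_ball hr hx.1
  have hF : ContinuousOn F K := fun x hx =>
    (hψ.contDiffAt_eval q (hK1 x hx)).continuousAt.continuousWithinAt
  have hT : ContinuousOn T K := fun x hx => (ContinuousAt.comp (f := fun y : ℂ × ℂ => (y.1, D y))
    (g := fun y : ℂ × ℂ => (N.map (ψ y.1)).eval y.2)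
    (hψ.contDiffAt_eval N (x := (x.1, D x)) (hK1 x hx)).continuousAt (continuousAt_fst.prodMk
      (hψ.contDiffAt_eval (derivative q) (hK1 x hx)).continuousAt)).continuousWithinAt
  -- On the roots of `q`, the open condition `D ≠ 0` is equivalent to the closed condition `T = 0`.
  have heq : simpleRoots ψ q r = (K ∩ F ⁻¹' {0}) ∩ (K ∩ T ⁻¹' {0}) := by
    ext x
    constructor
    · rintro ⟨hx, hFx, hDx⟩
      have hxK : x ∈ K := ⟨hx, mem_closedBall_zero_iff.2 (hB _ hx _ hFx)⟩
      have hTx := (mul_eq_zero.1 (pow_mul_eval_map_eq_zero_of_dvd hdvd (ψ x.1) hFx)).resolve_left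
        (pow_ne_zero j hDx)
      exact ⟨⟨hxK, hFx⟩, hxK, hTx⟩
    · rintro ⟨⟨hx, hFx⟩, -, hTx⟩
      refine ⟨hx.1, hFx, fun hDx => hN x.1 hx.1 ?_⟩
      have hTx' : (N.map (ψ x.1)).eval (D x) = 0 := hTx
      rwa [show D x = 0 from hDx, ← coeff_zero_eq_eval_zero, coeff_map] at hTx'
  rw [heq]
  refine hK.of_isClosed_subset ?_ fun x hx => hx.1.1
  exact (hF.preimage_isClosed_of_isClosed hK.isClosed isClosed_singleton).inter
    (hT.preimage_isClosed_of_isClosed hK.isClosed isClosed_singleton)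

theorem exists_eventually_mem_simpleRoots_iff (hψ : IsHoloFamily ψ ψ₀) {q : R[X]} {r : ℝ}
    (hr : r ≤ 1) {x : ℂ × ℂ} (hx : x ∈ simpleRoots ψ q r) (hxr : x.1 ∈ ball (0 : ℂ) r) :
    ∃ φ : ℂ → ℂ, DifferentiableAt ℂ φ x.1 ∧
      ∀ᶠ y in 𝓝 x, y ∈ simpleRoots ψ q r ↔ φ y.1 = y.2 := by
  have hx1 : x.1 ∈ ball (0 : ℂ) 1 := ball_subset_ball hr hxr
  have hF := (hψ.contDiffAt_eval q hx1).hasStrictFDerivAt one_ne_zero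
  have hF' : fderiv ℂ (fun y : ℂ × ℂ => (q.map (ψ y.1)).eval y.2) x (0, 1) ≠ 0 := by
    have hline : HasDerivAt (fun s : ℂ => (x.1, s)) ((0 : ℂ), (1 : ℂ)) x.2 :=
      (hasDerivAt_const _ _).prodMk (hasDerivAt_id _)
    have hcomp := HasFDerivAt.comp_hasDerivAt (f := fun s : ℂ => (x.1, s)) x.2 hF.hasFDerivAt hline
    have hpoly := (q.map (ψ x.1)).hasDerivAt x.2
    rw [derivative_map] at hpoly
    rw [hcomp.unique hpoly]
    exact hx.2.2
  obtain ⟨φ, hφ, hgraph⟩ := exists_eventually_eq_zero_iff_of_hasStrictFDerivAt hF hx.2.1 hF'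
  refine ⟨φ, hφ, ?_⟩
  have hball : ∀ᶠ y : ℂ × ℂ in 𝓝 x, y.1 ∈ ball (0 : ℂ) r :=
    continuousAt_fst.eventually (isOpen_ball.mem_nhds hxr)
  have hsimple := (hψ.contDiffAt_eval (derivative q) hx1).continuousAt.eventually_ne hx.2.2
  filter_upwards [hgraph, hball, hsimple] with y hy hyr hys
  rw [← hy]
  exact ⟨fun h => h.2.1, fun h => ⟨ball_subset_closedBall hyr, h, hys⟩⟩

theorem conj_mem_simpleRoots (hψ : IsHoloFamily ψ ψ₀) {q : R[X]} {r : ℝ} (hr : r < 1) {τ s : ℂ}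
    (h : (τ, s) ∈ simpleRoots ψ q r) : (conj τ, conj s) ∈ simpleRoots ψ q r := by
  obtain ⟨hτ, hroot, hsimple⟩ := h
  have hτ1 := closedBall_subset_ball hr hτ
  refine ⟨by simpa using hτ, ?_, ?_⟩
  · rw [hψ.eval_conj q hτ1, hroot, map_zero]
  · rw [hψ.eval_conj (derivative q) hτ1]
    exact (_root_.map_ne_zero _).2 hsimple

theorem exists_isRootSection (hψ : IsHoloFamily ψ ψ₀) {q N : R[X]} {j n : ℕ}
    (hdvd : q ∣ derivative q ^ j * N.comp (derivative q)) {r r₀ ε : ℝ} (hr : 0 < r) (hrr : r < r₀)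
    (hr₀ : r₀ ≤ 1) (hn : q.natDegree ≤ n) (hq : q.map ψ₀ ≠ 0) (hε : ε * 3 ^ n < 1)
    (hqc : ∀ l, Steady r₀ ε fun τ => ψ τ (q.coeff l))
    (hN : ∀ τ ∈ ball (0 : ℂ) r₀, ψ τ (N.coeff 0) ≠ 0) {a : ℝ} (ha : (q.map ψ₀).eval a = 0)
    (ha' : ((derivative q).map ψ₀).eval a ≠ 0) :
    ∃ θ : ℂ → ℂ, IsRootSection ψ q r θ ∧ θ 0 = a := by
  have hr1 : r < 1 := hrr.trans_le hr₀
  have hsub : closedBall (0 : ℂ) r ⊆ ball 0 r₀ := closedBall_subset_ball hrr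
  obtain ⟨B, hB⟩ := hψ.exists_forall_norm_le_of_root hq hn hε hqc
  have hcompact : IsCompact (simpleRoots ψ q r) :=
    hψ.isCompact_simpleRoots hdvd hr1 (fun τ hτ => hN τ (hsub hτ)) fun τ hτ => hB τ (hsub hτ)
  have ha0 : ((0 : ℂ), (a : ℂ)) ∈ simpleRoots ψ q r := by
    refine ⟨mem_closedBall_self hr.le, ?_, ?_⟩
    · rw [hψ.eval_zero_eq, ha, Complex.ofReal_zero]
    · rw [hψ.eval_zero_eq]
      exact_mod_cast ha'
  obtain ⟨θ, hθ, hθ0, hmem, huniq⟩ := exists_differentiableOn_section hr hcompact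
    (fun x hx hxr => hψ.exists_eventually_mem_simpleRoots_iff hr1.le hx hxr) ha0
  have hconj : MapsTo (conj : ℂ → ℂ) (ball 0 r) (ball 0 r) := fun τ hτ => by simpa using hτ
  refine ⟨θ, ⟨hθ, fun τ hτ => ?_, fun τ hτ => (hmem τ hτ).2.1⟩, hθ0⟩
  have heq : EqOn (fun σ => conj (θ (conj σ))) θ (ball 0 r) := by
    refine huniq _ (Complex.continuous_conj.comp_continuousOn
      (hθ.continuousOn.comp Complex.continuous_conj.continuousOn hconj)) (by simp [hθ0]) ?_
    intro σ hσ
    simpa using hψ.conj_mem_simpleRoots hr1 (hmem _ (hconj hσ))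
  simpa using (heq (hconj hτ)).symm

end IsHoloFamily

theorem exists_simple_root_iterate_derivative {R : Type*} [CommRing R] [IsDomain R] [CharZero R]
    {f : R[X]} (hf : f ≠ 0) {a : R} (ha : f.eval a = 0) :
    ∃ m, (derivative^[m] f).eval a = 0 ∧ (derivative^[m + 1] f).eval a ≠ 0 := by
  classical
  have hex : ∃ m, ¬ (derivative^[m] f).IsRoot a := by
    by_contra! h
    exact lt_irrefl _ ((lt_rootMultiplicity_iff_isRoot_iterate_derivative
      (n := f.rootMultiplicity a) hf).2 fun m _ => h m)
  have hpos : Nat.find hex ≠ 0 := fun h0 => by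
    have hspec := Nat.find_spec hex
    rw [h0] at hspec
    exact hspec ha
  obtain ⟨m, hm⟩ := Nat.exists_eq_succ_of_ne_zero hpos
  refine ⟨m, not_not.1 (Nat.find_min hex (by omega)), ?_⟩
  rw [← Nat.succ_eq_add_one, ← hm]
  exact Nat.find_spec hex

theorem hasseDeriv_map {S : Type*} [CommRing S] (f : R →+* S) (k : ℕ) (p : R[X]) :
    hasseDeriv k (p.map f) = (hasseDeriv k p).map f := by
  ext l
  simp [hasseDeriv_coeff]

theorem eval_add_eq_sum_hasseDeriv {S : Type*} [CommRing S] {p : S[X]} {n : ℕ}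
    (hn : p.natDegree ≤ n) (x y : S) :
    p.eval (x + y) = ∑ k ∈ Finset.range (n + 1), (hasseDeriv k p).eval x * y ^ k := by
  rw [add_comm, ← taylor_eval, eval_eq_sum_range' (n := n + 1)]
  · simp only [taylor_coeff]
  · rw [natDegree_taylor]
    exact Nat.lt_succ_of_le hn

namespace IsHoloFamily

theorem steady_eval_of_root (hψ : IsHoloFamily ψ ψ₀) {q p N : R[X]} {j n : ℕ}
    (hdvd : q ∣ p ^ j * N.comp p) {r ε : ℝ} (hr : 0 < r) (hr₁ : r ≤ 1)
    (hn : j + N.natDegree ≤ n) (hN : N.map ψ₀ ≠ 0) (hε : ε * 3 ^ n < 1)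
    (hNc : ∀ l, Steady r ε fun τ => ψ τ (N.coeff l)) {θ : ℂ → ℂ} (hθ : IsRootSection ψ q r θ) :
    Steady r (1 + 5 ^ n) fun τ => (p.map (ψ τ)).eval (θ τ) := by
  refine Steady.of_root (P := fun τ => X ^ j * N.map (ψ τ)) (ε := ε) hr
    (mul_ne_zero (pow_ne_zero _ X_ne_zero) (hψ.map_zero_ne_zero hN)) ?_ hε ?_
    (hψ.differentiableOn_eval p hr₁ hθ.diff) ?_
  · refine natDegree_mul_le.trans (le_trans ?_ hn)
    rw [natDegree_X_pow]
    exact Nat.add_le_add_left natDegree_map_le _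
  · intro l
    simp only [coeff_X_pow_mul', coeff_map]
    split_ifs
    exacts [hNc _, Steady.zero r ε]
  · intro τ hτ
    simpa using pow_mul_eval_map_eq_zero_of_dvd hdvd (ψ τ) (hθ.root τ hτ)

theorem steady_sub_of_root (hψ : IsHoloFamily ψ ψ₀) {q : R[X]} {n : ℕ} {r K : ℝ}
    (hr : 0 < r) (hK : 0 ≤ K) (hn : q.natDegree ≤ n) (hq : q.map ψ₀ ≠ 0) {θ θ' : ℂ → ℂ}
    (hθ : IsRootSection ψ q r θ) (hθ' : DifferentiableOn ℂ θ' (ball 0 r))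
    (hst : ∀ k, Steady r K fun τ => ((hasseDeriv k q).map (ψ τ)).eval (θ' τ)) {s : ℝ}
    (hs : 0 < s) (hs₁ : s ≤ 1) (hsK : s * K * 3 ^ n < 1) :
    Steady (s * r) (1 + 5 ^ n) fun τ => θ' τ - θ τ := by
  have hsr : ball (0 : ℂ) (s * r) ⊆ ball 0 r :=
    ball_subset_ball (mul_le_of_le_one_left hr.le hs₁)
  suffices Steady (s * r) (1 + 5 ^ n) fun τ => θ τ - θ' τ by simpa using this.neg
  refine Steady.of_root (P := fun τ => taylor (θ' τ) (q.map (ψ τ))) (ε := s * K) (mul_pos hs hr)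
    ?_ ?_ hsK (fun l => ?_) ((hθ.diff.sub hθ').mono hsr) fun τ hτ => ?_
  · rw [Ne, taylor_eq_zero]
    exact hψ.map_zero_ne_zero hq
  · rw [natDegree_taylor]
    exact natDegree_map_le.trans hn
  · simp only [taylor_coeff, hasseDeriv_map]
    exact (hst l).shrink hr hK hs₁
  · rw [taylor_eval, sub_add_cancel]
    exact hθ.root τ (hsr hτ)

theorem steady_eval_add (hψ : IsHoloFamily ψ ψ₀) {f : R[X]} {n : ℕ} {r K B : ℝ}
    (hr₁ : r ≤ 1) (hK : 0 ≤ K) (hn : f.natDegree ≤ n) {θ w : ℂ → ℂ} {a b : ℝ} (ha : θ 0 = a)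
    (hb : w 0 = b) (hθ : DifferentiableOn ℂ θ (ball 0 r))
    (hst : ∀ k, Steady r K fun τ => ((hasseDeriv k f).map (ψ τ)).eval (θ τ)) (hw : Steady r K w)
    (hB : ∑ k ∈ Finset.range (n + 1), |(hasseDeriv k (f.map ψ₀)).eval a * b ^ k| ≤
      B * |(f.map ψ₀).eval (a + b)|) :
    Steady r ((1 + K) ^ (n + 1) * B) fun τ => (f.map (ψ τ)).eval (θ τ + w τ) := by
  have hnorm : ‖(f.map (ψ 0)).eval (θ 0 + w 0)‖ = |(f.map ψ₀).eval (a + b)| := by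
    rw [ha, hb, ← Complex.ofReal_add, hψ.eval_zero_eq, Complex.norm_real, Real.norm_eq_abs]
  have hterm : ∀ k, ‖((hasseDeriv k f).map (ψ 0)).eval (θ 0) * w 0 ^ k‖ =
      |(hasseDeriv k (f.map ψ₀)).eval a * b ^ k| := fun k => by
    rw [ha, hb, hψ.eval_zero_eq, hasseDeriv_map, ← Complex.ofReal_pow, ← Complex.ofReal_mul,
      Complex.norm_real, Real.norm_eq_abs]
  refine ⟨hψ.differentiableOn_eval f hr₁ (hθ.add hw.diff), fun τ hτ => ?_⟩
  have hsum : ∀ σ, (f.map (ψ σ)).eval (θ σ + w σ) = ∑ k ∈ Finset.range (n + 1),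
      ((hasseDeriv k f).map (ψ σ)).eval (θ σ) * w σ ^ k := fun σ => by
    simp only [eval_add_eq_sum_hasseDeriv (natDegree_map_le.trans hn), hasseDeriv_map]
  rw [hnorm, hsum τ, hsum 0, ← Finset.sum_sub_distrib]
  calc ‖_‖ ≤ ∑ k ∈ Finset.range (n + 1), (1 + K) ^ (n + 1) *
        |(hasseDeriv k (f.map ψ₀)).eval a * b ^ k| := ?_
    _ ≤ (1 + K) ^ (n + 1) * B * |(f.map ψ₀).eval (a + b)| := by
        rw [← Finset.mul_sum, mul_assoc]
        gcongr
  refine norm_sum_le_of_le _ fun k hk => ?_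
  refine (((hst k).mul_pow hw k).bound τ hτ).trans ?_
  rw [hterm]
  gcongr
  exact (sub_le_self _ zero_le_one).trans
    (pow_le_pow_right₀ (by linarith) (Nat.succ_le_of_lt (Finset.mem_range.1 hk)))

end IsHoloFamily

end HoloFamily

/-! ### Steady partitions of the interval -/

section SteadyPartition

/-- The constant `B` bounds the absolute sum of the Taylor expansion at `a` of `f (a + b)`, relative
to its value, for polynomials `f` of degree at most `n` monotone in absolute value on the segment
from `a` to `a + 2 * b`. -/
def IsTaylorBound (n : ℕ) (B : ℝ) : Prop :=
  ∀ f : ℝ[X], f.natDegree ≤ n → ∀ a b : ℝ,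
    (MonotoneOn (fun x => |f.eval (a + b * x)|) (Ioo 0 2) ∨
      AntitoneOn (fun x => |f.eval (a + b * x)|) (Ioo 0 2)) →
    ∑ k ∈ Finset.range (n + 1), |(hasseDeriv k f).eval a * b ^ k| ≤ B * |f.eval (a + b)|

theorem exists_isTaylorBound (n : ℕ) : ∃ B, 0 ≤ B ∧ IsTaylorBound n B := by
  obtain ⟨B, hB0, hB⟩ := exists_sum_abs_coeff_le_abs_eval_one n
  refine ⟨B, hB0, fun f hf a b hmono => ?_⟩
  have heval : ∀ x, ((taylor a f).comp (C b * X)).eval x = f.eval (a + b * x) := fun x => by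
    simp [taylor_eval, add_comm]
  have hdeg : ((taylor a f).comp (C b * X)).natDegree ≤ n := by
    refine natDegree_comp_le.trans ?_
    rw [natDegree_taylor]
    refine (Nat.mul_le_mul_left _ ((natDegree_C_mul_le b X).trans natDegree_X_le)).trans ?_
    rwa [mul_one]
  simpa only [comp_C_mul_X_coeff, taylor_coeff, heval, mul_one] using
    hB _ hdeg (by simpa only [heval] using hmono)

theorem exists_finset_derivative_mem {R : Type*} [Semiring R] (F : Finset R[X])
    (hF : (0 : R[X]) ∉ F) :
    ∃ G : Finset R[X], F ⊆ G ∧ (0 : R[X]) ∉ G ∧ ∀ g ∈ G, derivative g = 0 ∨ derivative g ∈ G := by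
  classical
  let iterates (f : R[X]) : Finset R[X] :=
    (Finset.range (f.natDegree + 1)).image fun m => derivative^[m] f
  have hmem : ∀ f ∈ F, ∀ m, derivative^[m] f = 0 ∨ derivative^[m] f ∈ iterates f := by
    intro f _ m
    rcases lt_or_ge f.natDegree m with hm | hm
    · exact Or.inl (iterate_derivative_eq_zero hm)
    · exact Or.inr (Finset.mem_image_of_mem _ (Finset.mem_range.2 (Nat.lt_succ_of_le hm)))
  refine ⟨(F.biUnion iterates).erase 0, fun f hf => ?_, Finset.notMem_erase _ _, fun g hg => ?_⟩
  · have hf0 : f ≠ 0 := fun h => hF (h ▸ hf)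
    exact Finset.mem_erase.2 ⟨hf0, Finset.mem_biUnion.2 ⟨f, hf, (hmem f hf 0).resolve_left hf0⟩⟩
  · obtain ⟨f, hf, hfg⟩ := Finset.mem_biUnion.1 (Finset.mem_of_mem_erase hg)
    obtain ⟨m, -, rfl⟩ := Finset.mem_image.1 hfg
    rw [← Function.iterate_succ_apply' derivative m f]
    refine or_iff_not_imp_left.2 fun h0 => ?_
    exact Finset.mem_erase.2 ⟨h0, Finset.mem_biUnion.2 ⟨f, hf, (hmem f hf _).resolve_left h0⟩⟩

theorem iterate_derivative_eq_zero_or_mem {R : Type*} [Semiring R] {G : Finset R[X]}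
    (hG : ∀ g ∈ G, derivative g = 0 ∨ derivative g ∈ G) {g : R[X]} (hg : g ∈ G) (m : ℕ) :
    derivative^[m] g = 0 ∨ derivative^[m] g ∈ G := by
  induction m with
  | zero => exact Or.inr hg
  | succ m ih =>
    rw [Function.iterate_succ_apply']
    rcases ih with h | h
    · exact Or.inl (by rw [h, derivative_zero])
    · exact hG _ h

theorem exists_finset_hasseDeriv_mem {R : Type*} [Semiring R] (G : Finset R[X]) :
    ∃ P : Finset R[X], ∀ g ∈ G, ∀ k, hasseDeriv k g ∈ P := by
  classical
  refine ⟨G.biUnion fun g => (Finset.range (g.natDegree + 2)).image fun k => hasseDeriv k g,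
    fun g hg k => Finset.mem_biUnion.2 ⟨g, hg, Finset.mem_image.2 ?_⟩⟩
  rcases lt_or_ge g.natDegree k with hk | hk
  · refine ⟨g.natDegree + 1, by simp, ?_⟩
    rw [hasseDeriv_eq_zero_of_lt_natDegree _ _ hk,
      hasseDeriv_eq_zero_of_lt_natDegree _ _ (Nat.lt_succ_self _)]
  · exact ⟨k, Finset.mem_range.2 (by omega), rfl⟩

variable {R : Type*} [CommRing R]

/-- A finite set `G` of polynomials, of degree at most `n`, all of whose coefficients under `ψ` are
nearly constant on the disc of radius `r`. Moreover the values of the Hasse derivatives of members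
of `G` at the roots of members of `G` are annihilated by polynomials with the same property. -/
structure SteadySystem (ψ : ℂ → R →+* ℂ) (ψ₀ : R →+* ℝ) (G : Finset R[X]) (r ε : ℝ) (n : ℕ) :
    Prop where
  holo : IsHoloFamily ψ ψ₀
  le_one : r ≤ 1
  lt_one : ε * 3 ^ n < 1
  map_ne_zero : ∀ q ∈ G, q.map ψ₀ ≠ 0
  natDegree_le : ∀ q ∈ G, q.natDegree ≤ n
  steady_coeff : ∀ q ∈ G, ∀ l, Steady r ε fun τ => ψ τ (q.coeff l)
  exists_annihilator : ∀ q ∈ G, ∀ g ∈ G, ∀ k, ∃ (N : R[X]) (j : ℕ),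
    q ∣ hasseDeriv k g ^ j * N.comp (hasseDeriv k g) ∧ j + N.natDegree ≤ n ∧
      ψ₀ (N.coeff 0) ≠ 0 ∧ ∀ l, Steady r ε fun τ => ψ τ (N.coeff l)

theorem exists_steadySystem [IsDomain R] (G : Finset R[X]) (hG : (0 : R[X]) ∉ G) :
    ∃ F' : Finset R, (0 : R) ∉ F' ∧ ∃ n, ∀ (ψ : ℂ → R →+* ℂ) (ψ₀ : R →+* ℝ), IsHoloFamily ψ ψ₀ →
      (∀ c ∈ F', ψ₀ c ≠ 0 ∧ Steady 1 (1 / 2) fun τ => ψ τ c) →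
      SteadySystem ψ ψ₀ G (3 ^ n)⁻¹ ((3 ^ n)⁻¹ * (1 / 2)) n := by
  classical
  obtain ⟨P, hP⟩ := exists_finset_hasseDeriv_mem G
  choose! N j hN hdvd using fun (q : R[X]) (hq : q ≠ 0) (p : R[X]) => exists_dvd_pow_mul_comp hq p
  have hne : ∀ q ∈ G, q ≠ 0 := fun q hq h => hG (h ▸ hq)
  let H : Finset R[X] := G ∪ (G ×ˢ P).image fun x => N x.1 x.2
  have hNH : ∀ q ∈ G, ∀ p ∈ P, N q p ∈ H := fun q hq p hp => Finset.mem_union_right _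
    (Finset.mem_image_of_mem (fun x : R[X] × R[X] => N x.1 x.2) (Finset.mk_mem_product hq hp))
  let n : ℕ := max (G.sup natDegree) ((G ×ˢ P).sup fun x => j x.1 x.2 + (N x.1 x.2).natDegree)
  refine ⟨H.biUnion coeffs, by simp [mem_coeffs_iff, eq_comm], n, fun ψ ψ₀ hψ hF' => ?_⟩
  have hinv : ((3 : ℝ) ^ n)⁻¹ ≤ 1 := inv_le_one_of_one_le₀ (one_le_pow₀ (by norm_num))
  have hcoeff : ∀ p ∈ H, ∀ l, p.coeff l ≠ 0 → p.coeff l ∈ H.biUnion coeffs :=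
    fun p hp l hl => Finset.mem_biUnion.2 ⟨p, hp, coeff_mem_coeffs hl⟩
  have hsteady : ∀ p ∈ H, ∀ l, Steady (3 ^ n)⁻¹ ((3 ^ n)⁻¹ * (1 / 2)) fun τ => ψ τ (p.coeff l) := by
    intro p hp l
    by_cases hl : p.coeff l = 0
    · simpa [hl] using Steady.zero _ _
    · simpa using (hF' _ (hcoeff p hp l hl)).2.shrink one_pos (by norm_num) hinv
  refine ⟨hψ, hinv, by field_simp; norm_num, fun q hq hmap => ?_, fun q hq => ?_,
    fun q hq => hsteady q (Finset.mem_union_left _ hq), fun q hq g hg k => ?_⟩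
  · have hlead := (hF' _ (hcoeff q (Finset.mem_union_left _ hq) _
      (leadingCoeff_ne_zero.2 (hne q hq)))).1
    exact hlead (by rw [← coeff_map, hmap, coeff_zero])
  · exact (Finset.le_sup (f := natDegree) hq).trans (le_max_left _ _)
  · have hgP := hP g hg k
    refine ⟨_, _, hdvd q (hne q hq) _, ?_,
      (hF' _ (hcoeff _ (hNH q hq _ hgP) 0 (hN q (hne q hq) _))).1, hsteady _ (hNH q hq _ hgP)⟩
    exact (Finset.le_sup (f := fun x : R[X] × R[X] => j x.1 x.2 + (N x.1 x.2).natDegree)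
      (Finset.mk_mem_product hq hgP)).trans (le_max_right _ _)

namespace SteadySystem

variable {ψ : ℂ → R →+* ℂ} {ψ₀ : R →+* ℝ} {G : Finset R[X]} {r r' ε : ℝ} {n : ℕ}

theorem steady_eval (h : SteadySystem ψ ψ₀ G r ε n) (hr : 0 < r') (hrr : r' ≤ r) {q g : R[X]}
    (hq : q ∈ G) (hg : g ∈ G) (k : ℕ) {θ : ℂ → ℂ} (hθ : IsRootSection ψ q r' θ) :
    Steady r' (1 + 5 ^ n) fun τ => ((hasseDeriv k g).map (ψ τ)).eval (θ τ) := by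
  obtain ⟨N, j, hdvd, hn, hN, hNc⟩ := h.exists_annihilator q hq g hg k
  refine h.holo.steady_eval_of_root hdvd hr (hrr.trans h.le_one) hn (fun h0 => hN ?_) h.lt_one
    (fun l => (hNc l).mono hrr le_rfl) hθ
  rw [← coeff_map, h0, coeff_zero]

theorem exists_isRootSection (h : SteadySystem ψ ψ₀ G r ε n)
    (hG : ∀ g ∈ G, derivative g = 0 ∨ derivative g ∈ G) (hr : 0 < r') (hrr : r' < r) {g : R[X]}
    (hg : g ∈ G) {a : ℝ} (ha : (g.map ψ₀).eval a = 0) :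
    ∃ q ∈ G, ∃ θ, IsRootSection ψ q r' θ ∧ θ 0 = a := by
  obtain ⟨m, hroot, hsimple⟩ := exists_simple_root_iterate_derivative (h.map_ne_zero g hg) ha
  rw [Function.iterate_succ_apply', iterate_derivative_map, derivative_map] at hsimple
  rw [iterate_derivative_map] at hroot
  have hq : derivative^[m] g ∈ G :=
    (iterate_derivative_eq_zero_or_mem hG hg m).resolve_left fun h0 => hsimple (by simp [h0])
  obtain ⟨N, j, hdvd, -, hN, hNc⟩ := h.exists_annihilator _ hq _ hq 1
  rw [hasseDeriv_one] at hdvd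
  have hε : ε < 1 := by
    by_contra! hε
    exact h.lt_one.not_ge (one_le_mul_of_one_le_of_one_le hε (one_le_pow₀ (by norm_num)))
  refine ⟨_, hq, h.holo.exists_isRootSection hdvd hr hrr h.le_one (h.natDegree_le _ hq)
    (h.map_ne_zero _ hq) h.lt_one (h.steady_coeff _ hq) (fun τ hτ h0 => ?_) hroot hsimple⟩
  have hbound := (hNc 0).bound τ hτ
  have hpos : 0 < ‖ψ 0 (N.coeff 0)‖ := by
    rw [h.holo.at_zero, norm_pos_iff]
    exact_mod_cast hN
  rw [h0, zero_sub, norm_neg] at hbound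
  exact hbound.not_gt (mul_lt_of_lt_one_left hpos hε)

end SteadySystem

/-- Root sections `θ 0, …, θ M` of members of `G` starting at consecutive points
`0 = a 0 < ⋯ < a M = 1`, between which no member of `G` vanishes. -/
structure IsRootChain (ψ : ℂ → R →+* ℂ) (ψ₀ : R →+* ℝ) (G : Finset R[X]) (r : ℝ) (M : ℕ)
    (a : ℕ → ℝ) (θ : ℕ → ℂ → ℂ) : Prop where
  root : ∀ i, ∃ q ∈ G, IsRootSection ψ q r (θ i)
  at_zero : ∀ i, θ i 0 = a i
  first : a 0 = 0
  last : a M = 1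
  lt : ∀ i < M, a i < a (i + 1)
  ne_zero : ∀ i < M, ∀ g ∈ G, ∀ x ∈ Ioo (a i) (a (i + 1)), (g.map ψ₀).eval x ≠ 0

theorem SteadySystem.exists_isRootChain {ψ : ℂ → R →+* ℂ} {ψ₀ : R →+* ℝ} {G : Finset R[X]}
    {r r' ε : ℝ} {n : ℕ} (h : SteadySystem ψ ψ₀ G r ε n)
    (hG : ∀ g ∈ G, derivative g = 0 ∨ derivative g ∈ G) (hX : X ∈ G) (hX1 : X - C 1 ∈ G)
    (hr : 0 < r') (hrr : r' < r) : ∃ M a θ, IsRootChain ψ ψ₀ G r' M a θ := by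
  classical
  let A : Finset ℝ := (G.biUnion fun g => (g.map ψ₀).roots.toFinset).filter (· ∈ Icc 0 1)
  have hA : ∀ x, x ∈ A ↔ (∃ g ∈ G, (g.map ψ₀).eval x = 0) ∧ x ∈ Icc (0 : ℝ) 1 := by
    intro x
    simp only [A, Finset.mem_filter, Finset.mem_biUnion, Multiset.mem_toFinset]
    refine and_congr_left fun _ => exists_congr fun g => and_congr_right fun hg => ?_
    exact mem_roots (h.map_ne_zero g hg)
  have h0A : (0 : ℝ) ∈ A := (hA 0).2 ⟨⟨X, hX, by simp⟩, by simp⟩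
  have h1A : (1 : ℝ) ∈ A := (hA 1).2 ⟨⟨X - C 1, hX1, by simp⟩, by simp⟩
  obtain ⟨M, a, ha0, haM, haA, hgap⟩ := exists_consecutive h0A h1A fun x hx => ((hA x).1 hx).2
  have hsec : ∀ i, ∃ θ : ℂ → ℂ, (∃ q ∈ G, IsRootSection ψ q r' θ) ∧ θ 0 = a i := by
    intro i
    obtain ⟨g, hg, hga⟩ := ((hA _).1 (haA i)).1
    obtain ⟨q, hq, θ, hθ, hθ0⟩ := h.exists_isRootSection hG hr hrr hg hga
    exact ⟨θ, ⟨q, hq, hθ⟩, hθ0⟩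
  choose θ hθ hθ0 using hsec
  refine ⟨M, a, θ, hθ, hθ0, ha0, haM, fun i hi => (hgap i hi).1, fun i hi g hg x hx hgx => ?_⟩
  refine (hgap i hi).2 x hx ((hA x).2 ⟨⟨g, hg, hgx⟩, ?_, ?_⟩)
  · exact ((hA _).1 (haA i)).2.1.trans hx.1.le
  · exact hx.2.le.trans ((hA _).1 (haA (i + 1))).2.2

theorem le_one_of_mul_pow_lt_one {s : ℝ} {n : ℕ} (hs : s * (1 + 5 ^ n) * 3 ^ n < 1) : s ≤ 1 := by
  by_contra! h
  have hfive : (1 : ℝ) ≤ 1 + 5 ^ n := le_add_of_nonneg_right (by positivity)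
  have hthree : (1 : ℝ) ≤ 3 ^ n := one_le_pow₀ (by norm_num)
  exact hs.not_ge (one_le_mul_of_one_le_of_one_le
    (one_le_mul_of_one_le_of_one_le h.le hfive) hthree)

namespace IsRootChain

variable {ψ : ℂ → R →+* ℂ} {ψ₀ : R →+* ℝ} {G : Finset R[X]} {r ε s : ℝ} {n M : ℕ} {a : ℕ → ℝ}
  {θ : ℕ → ℂ → ℂ}

theorem steady_eval (c : IsRootChain ψ ψ₀ G r M a θ) {r₀ : ℝ} (h : SteadySystem ψ ψ₀ G r₀ ε n)
    (hr : 0 < r) (hrr : r ≤ r₀) {g : R[X]} (hg : g ∈ G) (k i : ℕ) :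
    Steady r (1 + 5 ^ n) fun τ => ((hasseDeriv k g).map (ψ τ)).eval (θ i τ) := by
  obtain ⟨q, hq, hθ⟩ := c.root i
  exact h.steady_eval hr hrr hq hg k hθ

theorem eval_eq_zero (c : IsRootChain ψ ψ₀ G r M a θ) {r₀ : ℝ} (h : SteadySystem ψ ψ₀ G r₀ ε n)
    (hr : 0 < r) (hrr : r ≤ r₀) {g : R[X]} (hg : g ∈ G) {i : ℕ} (hi : (g.map ψ₀).eval (a i) = 0)
    {τ : ℂ} (hτ : τ ∈ ball (0 : ℂ) r) : (g.map (ψ τ)).eval (θ i τ) = 0 := by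
  have hsteady := c.steady_eval h hr hrr hg 0 i
  simp only [hasseDeriv_zero'] at hsteady
  refine hsteady.eq_zero ?_ hτ
  rw [c.at_zero, h.holo.eval_zero_eq, hi, Complex.ofReal_zero]

theorem steady_gap (c : IsRootChain ψ ψ₀ G r M a θ) {r₀ : ℝ} (h : SteadySystem ψ ψ₀ G r₀ ε n)
    (hr : 0 < r) (hrr : r ≤ r₀) (hs : 0 < s) (hsK : s * (1 + 5 ^ n) * 3 ^ n < 1) (i : ℕ) :
    Steady (s * r) (1 + 5 ^ n) fun τ => θ (i + 1) τ - θ i τ := by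
  obtain ⟨q, hq, hθ⟩ := c.root i
  obtain ⟨_, -, hθ'⟩ := c.root (i + 1)
  exact h.holo.steady_sub_of_root hr (by positivity) (h.natDegree_le q hq) (h.map_ne_zero q hq) hθ
    hθ'.diff (fun k => c.steady_eval h hr hrr hq k (i + 1)) hs (le_one_of_mul_pow_lt_one hsK) hsK

theorem gap_zero (c : IsRootChain ψ ψ₀ G r M a θ) (i : ℕ) :
    θ (i + 1) 0 - θ i 0 = ((a (i + 1) - a i : ℝ) : ℂ) := by
  rw [c.at_zero, c.at_zero, Complex.ofReal_sub]

theorem monotoneOn_or_antitoneOn (c : IsRootChain ψ ψ₀ G r M a θ)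
    (hG : ∀ g ∈ G, derivative g = 0 ∨ derivative g ∈ G) {g : R[X]} (hg : g ∈ G) {i : ℕ}
    (hi : i < M) :
    MonotoneOn (fun x => |(g.map ψ₀).eval x|) (Ioo (a i) (a (i + 1))) ∨
      AntitoneOn (fun x => |(g.map ψ₀).eval x|) (Ioo (a i) (a (i + 1))) := by
  rcases hG g hg with hderiv | hderiv
  · left
    rw [eq_C_of_derivative_eq_zero (p := g.map ψ₀)
      (by rw [derivative_map, hderiv, Polynomial.map_zero])]
    simpa only [eval_C] using monotoneOn_const
  · refine monotoneOn_or_antitoneOn_abs_eval (convex_Ioo _ _) (c.ne_zero i hi g hg) ?_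
    rw [derivative_map]
    exact c.ne_zero i hi _ hderiv

theorem monotoneOn_or_antitoneOn_affine (c : IsRootChain ψ ψ₀ G r M a θ)
    (hG : ∀ g ∈ G, derivative g = 0 ∨ derivative g ∈ G) {g : R[X]} (hg : g ∈ G) {i : ℕ}
    (hi : i < M) {x₀ b : ℝ} {t : Set ℝ}
    (hb : MapsTo (fun x => x₀ + b * x) t (Ioo (a i) (a (i + 1)))) :
    MonotoneOn (fun x => |(g.map ψ₀).eval (x₀ + b * x)|) t ∨
      AntitoneOn (fun x => |(g.map ψ₀).eval (x₀ + b * x)|) t := by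
  rcases le_total 0 b with hb0 | hb0
  · have hmono : MonotoneOn (fun x => x₀ + b * x) t := fun x _ y _ hxy =>
      add_le_add_right (mul_le_mul_of_nonneg_left hxy hb0) x₀
    exact (c.monotoneOn_or_antitoneOn hG hg hi).imp (fun h => h.comp hmono hb)
      fun h => h.comp_MonotoneOn hmono hb
  · have hanti : AntitoneOn (fun x => x₀ + b * x) t := fun x _ y _ hxy =>
      add_le_add_right (mul_le_mul_of_nonpos_left hxy hb0) x₀
    exact (c.monotoneOn_or_antitoneOn hG hg hi).symm.imp (fun h => h.comp hanti hb)
      fun h => h.comp_AntitoneOn hanti hb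

theorem steady_eval_add_mul_gap (c : IsRootChain ψ ψ₀ G r M a θ) {r₀ : ℝ}
    (h : SteadySystem ψ ψ₀ G r₀ ε n) (hG : ∀ g ∈ G, derivative g = 0 ∨ derivative g ∈ G)
    (hr : 0 < r) (hrr : r ≤ r₀) (hs : 0 < s) (hsK : s * (1 + 5 ^ n) * 3 ^ n < 1) {B : ℝ}
    (hB : IsTaylorBound n B)
    {g : R[X]} (hg : g ∈ G) {i : ℕ} (hi : i < M) {l : ℕ} {b : ℝ}
    (hb : ∀ x ∈ Ioo (0 : ℝ) 2, a l + b * (a (i + 1) - a i) * x ∈ Ioo (a i) (a (i + 1))) :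
    Steady (s * r) ((1 + (1 + 5 ^ n)) ^ (n + 1) * B)
      fun τ => (g.map (ψ τ)).eval (θ l τ + b * (θ (i + 1) τ - θ i τ)) := by
  have hsr : s * r ≤ r := mul_le_of_le_one_left hr.le (le_one_of_mul_pow_lt_one hsK)
  obtain ⟨_, -, hθ⟩ := c.root l
  have hgap : Steady (s * r) (1 + 5 ^ n) fun τ => (b : ℂ) * (θ (i + 1) τ - θ i τ) := by
    simpa using (Steady.const (s * r) (b : ℂ)).mul (c.steady_gap h hr hrr hs hsK i)
  refine h.holo.steady_eval_add (hsr.trans (hrr.trans h.le_one)) (by positivity)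
    (h.natDegree_le g hg) (c.at_zero l) ?_ (hθ.diff.mono (ball_subset_ball hsr))
    (fun k => (c.steady_eval h hr hrr hg k l).mono hsr le_rfl) hgap
    (hB _ (natDegree_map_le.trans (h.natDegree_le g hg)) _ (b * (a (i + 1) - a i))
      (c.monotoneOn_or_antitoneOn_affine hG hg hi hb))
  rw [c.gap_zero, Complex.ofReal_mul]

theorem steady_eval_convexCombo (c : IsRootChain ψ ψ₀ G r M a θ) {r₀ : ℝ}
    (h : SteadySystem ψ ψ₀ G r₀ ε n) (hG : ∀ g ∈ G, derivative g = 0 ∨ derivative g ∈ G)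
    (hr : 0 < r) (hrr : r ≤ r₀) (hs : 0 < s) (hsK : s * (1 + 5 ^ n) * 3 ^ n < 1) {B : ℝ}
    (hB : IsTaylorBound n B)
    {g : R[X]} (hg : g ∈ G) {i : ℕ} (hi : i < M) {t : ℝ} (ht : t ∈ Ioo (0 : ℝ) 1) :
    Steady (s * r) ((1 + (1 + 5 ^ n)) ^ (n + 1) * B)
      fun τ => (g.map (ψ τ)).eval (θ i τ + t * (θ (i + 1) τ - θ i τ)) := by
  have hlt := c.lt i hi
  rcases le_or_gt t (1 / 2) with hle | hgt
  · refine c.steady_eval_add_mul_gap h hG hr hrr hs hsK hB hg hi fun x hx => ?_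
    have hpos : 0 < t * x := mul_pos ht.1 hx.1
    have hlt1 : t * x < 1 := by nlinarith [hx.1, hx.2]
    constructor <;> nlinarith
  · have hright := c.steady_eval_add_mul_gap h hG hr hrr hs hsK hB hg hi (l := i + 1) (b := t - 1)
      fun x hx => by
        have hpos : 0 < (1 - t) * x := mul_pos (by linarith [ht.2]) hx.1
        have hlt1 : (1 - t) * x < 1 := by nlinarith [hx.1, hx.2]
        constructor <;> nlinarith
    have heq : ∀ τ, θ (i + 1) τ + ((t - 1 : ℝ) : ℂ) * (θ (i + 1) τ - θ i τ) =
        θ i τ + t * (θ (i + 1) τ - θ i τ) := fun τ => by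
      push_cast
      ring
    simpa only [heq] using hright

theorem eval_convexCombo_ne_zero (c : IsRootChain ψ ψ₀ G r M a θ) (hψ : IsHoloFamily ψ ψ₀)
    {g : R[X]} (hg : g ∈ G) {i : ℕ} (hi : i < M) {t : ℝ} (ht : t ∈ Ioo (0 : ℝ) 1) :
    (g.map (ψ 0)).eval (θ i 0 + t * (θ (i + 1) 0 - θ i 0)) ≠ 0 := by
  have hlt := c.lt i hi
  rw [c.gap_zero, c.at_zero, ← Complex.ofReal_mul, ← Complex.ofReal_add, hψ.eval_zero_eq]
  exact_mod_cast c.ne_zero i hi g hg _ ⟨by nlinarith [ht.1], by nlinarith [ht.2]⟩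

end IsRootChain

/-- A partition of the complexified unit interval, depending holomorphically on a parameter in the
disc of radius `ρ`, such that every polynomial of the family `F` is steady on each of the pieces. -/
structure IsSteadyPartition (ψ : ℂ → R →+* ℂ) (F : Finset R[X]) (ρ : ℝ) (M : ℕ)
    (θ : ℕ → ℂ → ℂ) : Prop where
  diff : ∀ i ≤ M, DifferentiableOn ℂ (θ i) (ball 0 ρ)
  map_conj : ∀ i ≤ M, ∀ τ ∈ ball (0 : ℂ) ρ, θ i (conj τ) = conj (θ i τ)
  first : ∀ τ ∈ ball (0 : ℂ) ρ, θ 0 τ = 0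
  last : ∀ τ ∈ ball (0 : ℂ) ρ, θ M τ = 1
  gap : ∀ i < M, Steady ρ (1 / 2) fun τ => θ (i + 1) τ - θ i τ
  gap_pos : ∀ i < M, 0 < (θ (i + 1) 0 - θ i 0).re
  steady : ∀ i < M, ∀ f ∈ F, ∀ t ∈ Ioo (0 : ℝ) 1,
    Steady ρ (1 / 2) fun τ => (f.map (ψ τ)).eval (θ i τ + t * (θ (i + 1) τ - θ i τ))
  ne_zero : ∀ i < M, ∀ f ∈ F, ∀ t ∈ Ioo (0 : ℝ) 1,
    (f.map (ψ 0)).eval (θ i 0 + t * (θ (i + 1) 0 - θ i 0)) ≠ 0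

theorem IsRootChain.isSteadyPartition {ψ : ℂ → R →+* ℂ} {ψ₀ : R →+* ℝ} {F G : Finset R[X]}
    {r₀ r ε s B L : ℝ} {n M : ℕ} {a : ℕ → ℝ} {θ : ℕ → ℂ → ℂ} (c : IsRootChain ψ ψ₀ G r M a θ)
    (h : SteadySystem ψ ψ₀ G r₀ ε n) (hG : ∀ g ∈ G, derivative g = 0 ∨ derivative g ∈ G)
    (hX : X ∈ G) (hX1 : X - C 1 ∈ G) (hFG : F ⊆ G) (hr : 0 < r) (hrr : r ≤ r₀) (hs : 0 < s)
    (hsn : s * (1 + 5 ^ n) * 3 ^ n < 1) (hB : IsTaylorBound n B) (hKL : 1 + 5 ^ n ≤ L)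
    (hBL : (1 + (1 + 5 ^ n)) ^ (n + 1) * B ≤ L) :
    IsSteadyPartition ψ F ((2 * L)⁻¹ * (s * r)) M θ := by
  have hL : 1 ≤ L := (le_add_of_nonneg_right (by positivity)).trans hKL
  have hball : ball (0 : ℂ) ((2 * L)⁻¹ * (s * r)) ⊆ ball 0 r := ball_subset_ball <|
    (mul_le_of_le_one_left (by positivity) (inv_le_one_of_one_le₀ (by linarith))).trans
      (mul_le_of_le_one_left hr.le (le_one_of_mul_pow_lt_one hsn))
  have hhalf : ∀ {J e}, J ≤ L → Steady (s * r) J e → Steady ((2 * L)⁻¹ * (s * r)) (1 / 2) e :=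
    fun hJ he => (he.mono le_rfl hJ).one_half (by positivity) hL
  refine ⟨fun i _ => ?_, fun i _ τ hτ => ?_, fun τ hτ => ?_, fun τ hτ => ?_, fun i _ => ?_,
    fun i hi => ?_, fun i hi f hf t ht => ?_, fun i hi f hf t ht => ?_⟩
  · obtain ⟨_, -, hθ⟩ := c.root i
    exact hθ.diff.mono hball
  · obtain ⟨_, -, hθ⟩ := c.root i
    exact hθ.map_conj τ (hball hτ)
  · simpa using c.eval_eq_zero h hr hrr hX (i := 0) (by simp [c.first]) (hball hτ)
  · simpa [sub_eq_zero] using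
      c.eval_eq_zero h hr hrr hX1 (i := M) (by simp [c.last]) (hball hτ)
  · exact hhalf hKL (c.steady_gap h hr hrr hs hsn i)
  · rw [c.gap_zero, Complex.ofReal_re]
    exact sub_pos.2 (c.lt i hi)
  · exact hhalf hBL (c.steady_eval_convexCombo h hG hr hrr hs hsn hB (hFG hf) hi ht)
  · exact c.eval_convexCombo_ne_zero h.holo (hFG hf) hi ht

theorem exists_isSteadyPartition [IsDomain R] (F : Finset R[X]) (hF : (0 : R[X]) ∉ F) :
    ∃ F' : Finset R, (0 : R) ∉ F' ∧ ∃ ρ > 0, ρ ≤ 1 ∧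
      ∀ (ψ : ℂ → R →+* ℂ) (ψ₀ : R →+* ℝ), IsHoloFamily ψ ψ₀ →
        (∀ c ∈ F', ψ₀ c ≠ 0 ∧ Steady 1 (1 / 2) fun τ => ψ τ c) →
        ∃ M θ, IsSteadyPartition ψ F ρ M θ := by
  classical
  obtain ⟨G, hFG, hG0, hG⟩ := exists_finset_derivative_mem (F ∪ {X, X - C 1})
    (by simp [-map_one, hF, X_ne_zero.symm, (X_sub_C_ne_zero (1 : R)).symm])
  have hX : X ∈ G := hFG (by simp)
  have hX1 : X - C 1 ∈ G := hFG (by simp)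
  obtain ⟨F', hF'0, n, hF'⟩ := exists_steadySystem G hG0
  obtain ⟨B, hB0, hB⟩ := exists_isTaylorBound n
  set r : ℝ := (3 ^ n)⁻¹ / 2
  set s : ℝ := (2 * ((1 + 5 ^ n) * 3 ^ n))⁻¹ with hs
  set L : ℝ := 1 + 5 ^ n + (1 + (1 + 5 ^ n)) ^ (n + 1) * B
  have hr : 0 < r := by positivity
  have hrr : r < (3 ^ n)⁻¹ := half_lt_self (by positivity)
  have hr1 : r ≤ 1 := hrr.le.trans (inv_le_one_of_one_le₀ (one_le_pow₀ (by norm_num)))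
  have hsn : s * (1 + 5 ^ n) * 3 ^ n < 1 := by rw [hs]; field_simp; norm_num
  have hKL : 1 + 5 ^ n ≤ L := le_add_of_nonneg_right (by positivity)
  have hL : 1 ≤ L := (le_add_of_nonneg_right (by positivity)).trans hKL
  refine ⟨F', hF'0, (2 * L)⁻¹ * (s * r), by positivity, ?_, fun ψ ψ₀ hψ hgood => ?_⟩
  · exact mul_le_one₀ (inv_le_one_of_one_le₀ (by linarith)) (by positivity)
      (mul_le_one₀ (le_one_of_mul_pow_lt_one hsn) hr.le hr1)
  have h := hF' ψ ψ₀ hψ hgood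
  obtain ⟨M, a, θ, c⟩ := h.exists_isRootChain hG hX hX1 hr hrr
  exact ⟨M, θ, c.isSteadyPartition h hG hX hX1 (Finset.union_subset_left hFG) hr hrr.le
    (by positivity) hsn hB hKL (le_add_of_nonneg_left (by positivity))⟩

end SteadyPartition

/-! ### Good curves -/

section Curves

variable {A : Type*} [CommRing A] {n : ℕ}

/-- Evaluation of a polynomial at a complex point, its coefficients being made real by `φ`. -/
noncomputable def complexEval (φ : A →+* ℝ) (x : Fin n → ℂ) : MvPolynomial (Fin n) A →+* ℂ :=
  MvPolynomial.eval₂Hom (Complex.ofRealHom.comp φ) x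

theorem complexEval_eq (φ : A →+* ℝ) (x : Fin n → ℂ) (f : MvPolynomial (Fin n) A) :
    complexEval φ x f = ∑ m ∈ f.support, (φ (f.coeff m) : ℂ) * ∏ i, x i ^ m i := by
  simp [complexEval, MvPolynomial.eval₂_eq']

theorem complexEval_ofReal (φ : A →+* ℝ) (x : Fin n → ℝ) (f : MvPolynomial (Fin n) A) :
    complexEval φ (fun i => (x i : ℂ)) f = (MvPolynomial.eval₂Hom φ x f : ℝ) := by
  simp [complexEval, MvPolynomial.eval₂_eq']

theorem complexEval_cons (φ : A →+* ℝ) (y : ℂ) (x : Fin n → ℂ) (f : MvPolynomial (Fin (n + 1)) A) :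
    complexEval φ (Fin.cons y x) f =
      ((MvPolynomial.finSuccEquiv A n f).map (complexEval φ x)).eval y := by
  have h : complexEval φ (Fin.cons y x) = (evalRingHom y).comp
      ((mapRingHom (complexEval φ x)).comp
        (MvPolynomial.finSuccEquiv A n : MvPolynomial (Fin (n + 1)) A →+* _)) := by
    refine MvPolynomial.ringHom_ext (fun a => ?_) (fun i => ?_)
    · simp [complexEval, MvPolynomial.finSuccEquiv_apply]
    · cases i using Fin.cases with
      | zero => simp [complexEval, MvPolynomial.finSuccEquiv_X_zero]
      | succ i => simp [complexEval, MvPolynomial.finSuccEquiv_X_succ]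
  rw [h]
  simp

/-- A holomorphic curve on the unit disc, real on the real axis, along which the polynomials in `F`
are steady. -/
structure IsGoodCurve (φ : A →+* ℝ) (F : Finset (MvPolynomial (Fin n) A)) (X : ℂ → Fin n → ℂ) :
    Prop where
  diff : ∀ i, DifferentiableOn ℂ (fun τ => X τ i) (ball 0 1)
  map_conj : ∀ i, ∀ τ ∈ ball (0 : ℂ) 1, X (conj τ) i = conj (X τ i)
  ne_zero : ∀ f ∈ F, complexEval φ (X 0) f ≠ 0
  steady : ∀ f ∈ F, Steady 1 (1 / 2) fun τ => complexEval φ (X τ) f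

/-- The real point of a curve at the real time `h`. -/
def realPoint (X : ℂ → Fin n → ℂ) (h : ℝ) : Fin n → ℝ := fun i => (X h i).re

namespace IsGoodCurve

variable {φ : A →+* ℝ} {F : Finset (MvPolynomial (Fin n) A)} {X : ℂ → Fin n → ℂ}

theorem ofReal_realPoint (hX : IsGoodCurve φ F X) {h : ℝ} (hh : |h| < 1) :
    (fun i => (realPoint X h i : ℂ)) = X h := by
  funext i
  have hconj := hX.map_conj i h (by simpa using hh)
  rw [Complex.conj_ofReal] at hconj
  exact Complex.conj_eq_iff_re.1 hconj.symm

theorem complexEval_apply_ofReal (hX : IsGoodCurve φ F X) {h : ℝ} (hh : |h| < 1)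
    (f : MvPolynomial (Fin n) A) :
    complexEval φ (X h) f = (MvPolynomial.eval₂Hom φ (realPoint X h) f : ℝ) := by
  rw [← hX.ofReal_realPoint hh, complexEval_ofReal]

theorem isHoloFamily (hX : IsGoodCurve φ F X) : IsHoloFamily (fun τ => complexEval φ (X τ))
    (MvPolynomial.eval₂Hom φ (realPoint X 0)) where
  diff f := by
    simp only [complexEval_eq]
    refine DifferentiableOn.fun_sum fun m _ => DifferentiableOn.const_mul ?_ _
    exact DifferentiableOn.fun_finsetProd fun i _ => (hX.diff i).pow _
  map_conj f τ hτ := by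
    simp only [complexEval_eq, map_sum, map_mul, map_prod, map_pow, Complex.conj_ofReal,
      hX.map_conj _ τ hτ]
  at_zero f := by simpa using hX.complexEval_apply_ofReal (h := 0) (by simp) f

end IsGoodCurve

/-- Smallness to first and second order of the relative variation of a function along good
curves. -/
structure IsTame (φ : A →+* ℝ) (F : Finset (MvPolynomial (Fin n) A)) (c K : ℝ)
    (H : (Fin n → ℝ) → ℝ) : Prop where
  first : ∀ X, IsGoodCurve φ F X → ∀ h : ℝ, |h| < c →
    |H (realPoint X h) - H (realPoint X 0)| ≤ K * |h| * H (realPoint X 0)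
  second : ∀ X, IsGoodCurve φ F X → ∀ h : ℝ, |h| < c →
    |H (realPoint X h) + H (realPoint X (-h)) - 2 * H (realPoint X 0)| ≤
      K * |h| ^ 2 * H (realPoint X 0)

/-- The curve `X`, slowed down by the factor `ρ`, together with a first coordinate which divides the
moving segment from `u` to `v` in the ratio `t : 1 - t`. -/
def liftCurve (ρ : ℝ) (X : ℂ → Fin n → ℂ) (u v : ℂ → ℂ) (t : ℝ) (τ : ℂ) : Fin (n + 1) → ℂ :=
  Fin.cons (u (ρ * τ) + t * (v (ρ * τ) - u (ρ * τ))) (X (ρ * τ))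

theorem realPoint_liftCurve {ρ : ℝ} (hρ : ρ ≠ 0) (X : ℂ → Fin n → ℂ) (u v : ℂ → ℂ) (t h : ℝ) :
    realPoint (liftCurve ρ X u v t) (h / ρ) =
      Fin.cons ((u h).re + t * (v h - u h).re) (realPoint X h) := by
  have htime : (ρ : ℂ) * ((h / ρ : ℝ) : ℂ) = h := by
    rw [← Complex.ofReal_mul, mul_div_cancel₀ _ hρ]
  funext l
  simp only [realPoint, liftCurve, htime]
  cases l using Fin.cases <;> simp [realPoint]

variable {φ : A →+* ℝ} {F : Finset (MvPolynomial (Fin (n + 1)) A)}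
  {F' : Finset (MvPolynomial (Fin n) A)} {X : ℂ → Fin n → ℂ} {ρ : ℝ} {M : ℕ} {θ : ℕ → ℂ → ℂ}

theorem IsSteadyPartition.isGoodCurve_liftCurve (hX : IsGoodCurve φ F' X)
    (hθ : IsSteadyPartition (fun τ => complexEval φ (X τ))
      (F.map (MvPolynomial.finSuccEquiv A n).toEquiv.toEmbedding) ρ M θ) (hρ : 0 < ρ) (hρ₁ : ρ ≤ 1)
    {i : ℕ} (hi : i < M) {t : ℝ} (ht : t ∈ Ioo (0 : ℝ) 1) :
    IsGoodCurve φ F (liftCurve ρ X (θ i) (θ (i + 1)) t) := by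
  have hmaps := mapsTo_ofReal_mul_ball hρ
  have hdiff : DifferentiableOn ℂ (fun τ : ℂ => (ρ : ℂ) * τ) (ball 0 1) :=
    (differentiable_id.const_mul _).differentiableOn
  have hball : ball (0 : ℂ) ρ ⊆ ball 0 1 := ball_subset_ball hρ₁
  have hF : ∀ f ∈ F, MvPolynomial.finSuccEquiv A n f ∈
      F.map (MvPolynomial.finSuccEquiv A n).toEquiv.toEmbedding := fun f hf =>
    Finset.mem_map_of_mem (MvPolynomial.finSuccEquiv A n).toEquiv.toEmbedding hf
  refine ⟨fun l => ?_, fun l τ hτ => ?_, fun f hf => ?_, fun f hf => ?_⟩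
  · cases l using Fin.cases with
    | zero =>
      have hleft := (hθ.diff i hi.le).comp hdiff hmaps
      have hright := (hθ.diff (i + 1) hi).comp hdiff hmaps
      exact hleft.add ((hright.sub hleft).const_mul _)
    | succ l => exact (hX.diff l).comp hdiff (hmaps.mono_right hball)
  · have hc : (ρ : ℂ) * conj τ = conj (ρ * τ) := by rw [map_mul, Complex.conj_ofReal]
    cases l using Fin.cases with
    | zero =>
      simp only [liftCurve, Fin.cons_zero, hc, hθ.map_conj i hi.le _ (hmaps hτ),
        hθ.map_conj (i + 1) hi _ (hmaps hτ)]
      simp only [map_add, map_mul, map_sub, Complex.conj_ofReal]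
    | succ l =>
      simp only [liftCurve, Fin.cons_succ, hc]
      exact hX.map_conj l _ (hball (hmaps hτ))
  · simp only [liftCurve, complexEval_cons, mul_zero]
    exact hθ.ne_zero i hi _ (hF f hf) t ht
  · simp only [liftCurve, complexEval_cons]
    exact (hθ.steady i hi _ (hF f hf) t ht).comp_mul hρ

end Curves

/-! ### Tame functions and their integrals -/

section TameIntegral

theorem abs_intervalIntegral_le {f g : ℝ → ℝ} {a b C : ℝ} (hab : a ≤ b)
    (hg : IntervalIntegrable g volume a b) (h : ∀ t ∈ Ioo a b, |f t| ≤ C * g t) :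
    |∫ t in a..b, f t| ≤ C * ∫ t in a..b, g t := by
  rw [← intervalIntegral.integral_const_mul, ← Real.norm_eq_abs]
  refine intervalIntegral.norm_integral_le_of_norm_le hab ?_ (hg.const_mul C)
  have hne : ∀ᵐ t : ℝ, t ≠ b := by simp [ae_iff]
  filter_upwards [hne] with t ht hmem
  exact h t ⟨hmem.1, lt_of_le_of_ne hmem.2 ht⟩

theorem abs_mul_sub_le {I I₀ W W₀ K x : ℝ} (hx : x ≤ 1) (hI₀ : 0 ≤ I₀)
    (hW₀ : 0 ≤ W₀) (hI : |I - I₀| ≤ K * x * I₀) (hW : |W - W₀| ≤ 1 / 2 * x * W₀) :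
    |I * W - I₀ * W₀| ≤ (2 * K + 1) * x * (I₀ * W₀) := by
  have hI_nonneg : 0 ≤ K * x * I₀ := (abs_nonneg _).trans hI
  have hW_nonneg : 0 ≤ 1 / 2 * x * W₀ := (abs_nonneg _).trans hW
  have habs : |W| ≤ 2 * W₀ := by
    have := abs_sub_abs_le_abs_sub W W₀
    rw [abs_of_nonneg hW₀] at this
    nlinarith
  calc |I * W - I₀ * W₀| = |(I - I₀) * W + I₀ * (W - W₀)| := by ring_nf
    _ ≤ |I - I₀| * |W| + I₀ * |W - W₀| := by
        refine (abs_add_le _ _).trans ?_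
        rw [abs_mul, abs_mul, abs_of_nonneg hI₀]
    _ ≤ (K * x * I₀) * (2 * W₀) + I₀ * (1 / 2 * x * W₀) := by gcongr
    _ ≤ _ := by nlinarith [mul_nonneg hI₀ hW_nonneg]

theorem abs_mul_second_diff_le {I J I₀ W V W₀ K x : ℝ} (hI₀ : 0 ≤ I₀) (hW₀ : 0 ≤ W₀)
    (hI : |I - I₀| ≤ K * x * I₀) (hJ : |J - I₀| ≤ K * x * I₀)
    (hW : |W - W₀| ≤ 1 / 2 * x * W₀) (hV : |V - W₀| ≤ 1 / 2 * x * W₀)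
    (hIJ : |I + J - 2 * I₀| ≤ K * x ^ 2 * I₀) (hWV : |W + V - 2 * W₀| ≤ x ^ 2 * W₀) :
    |I * W + J * V - 2 * (I₀ * W₀)| ≤ (2 * K + 1) * x ^ 2 * (I₀ * W₀) := by
  have hI_nonneg : 0 ≤ K * x * I₀ := (abs_nonneg _).trans hI
  calc |I * W + J * V - 2 * (I₀ * W₀)|
      = |(I + J - 2 * I₀) * W₀ + (I - I₀) * (W - W₀) + (J - I₀) * (V - W₀)
          + I₀ * (W + V - 2 * W₀)| := by ring_nf
    _ ≤ |(I + J - 2 * I₀) * W₀| + |(I - I₀) * (W - W₀)| + |(J - I₀) * (V - W₀)|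
          + |I₀ * (W + V - 2 * W₀)| := (abs_add_le _ _).trans (by gcongr; exact abs_add_three _ _ _)
    _ = |I + J - 2 * I₀| * W₀ + |I - I₀| * |W - W₀| + |J - I₀| * |V - W₀|
          + I₀ * |W + V - 2 * W₀| := by simp only [abs_mul, abs_of_nonneg hW₀, abs_of_nonneg hI₀]
    _ ≤ (K * x ^ 2 * I₀) * W₀ + (K * x * I₀) * (1 / 2 * x * W₀) + (K * x * I₀) * (1 / 2 * x * W₀)
          + I₀ * (x ^ 2 * W₀) := by gcongr
    _ = _ := by ring

variable {A : Type*} [CommRing A] {n : ℕ} {φ : A →+* ℝ}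
  {F : Finset (MvPolynomial (Fin (n + 1)) A)} {F' : Finset (MvPolynomial (Fin n) A)}
  {X : ℂ → Fin n → ℂ} {ρ : ℝ} {M : ℕ} {θ : ℕ → ℂ → ℂ} {H : (Fin (n + 1) → ℝ) → ℝ} {B : ℝ}

theorem measurable_cons (x : Fin n → ℝ) :
    Measurable fun y : ℝ => (Fin.cons y x : Fin (n + 1) → ℝ) := by
  refine measurable_pi_iff.2 fun i => ?_
  cases i using Fin.cases with
  | zero => exact measurable_id
  | succ i => exact measurable_const

theorem intervalIntegrable_of_abs_le {f : ℝ → ℝ} (hf : Measurable f) (hB : ∀ x, |f x| ≤ B)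
    (a b : ℝ) : IntervalIntegrable f volume a b :=
  IntervalIntegrable.mono_fun (f := fun _ => B) intervalIntegrable_const hf.aestronglyMeasurable
    (ae_of_all _ fun x => (hB x).trans (le_abs_self B))

theorem integral_cons_eq_sum (hH : Measurable H) (hB : ∀ x, |H x| ≤ B) (x : Fin n → ℝ)
    (a : ℕ → ℝ) (ha : a 0 = 0) (haM : a M = 1) :
    ∫ y in (0 : ℝ)..1, H (Fin.cons y x) = ∑ i ∈ Finset.range M,
      (∫ t in (0 : ℝ)..1, H (Fin.cons (a i + t * (a (i + 1) - a i)) x)) * (a (i + 1) - a i) := by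
  have hint : ∀ u v : ℝ, IntervalIntegrable (fun y => H (Fin.cons y x)) volume u v :=
    intervalIntegrable_of_abs_le (hH.comp (measurable_cons x)) fun y => hB _
  have hadj := intervalIntegral.sum_integral_adjacent_intervals (n := M)
    (fun i _ => hint (a i) (a (i + 1)))
  rw [ha, haM] at hadj
  rw [← hadj]
  refine Finset.sum_congr rfl fun i _ => ?_
  have hsubst := intervalIntegral.smul_integral_comp_add_mul (a := 0) (b := 1)
    (fun y => H (Fin.cons y x)) (a (i + 1) - a i) (a i)
  rw [mul_zero, add_zero, mul_one, add_sub_cancel, smul_eq_mul] at hsubst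
  rw [← hsubst, mul_comm]
  simp only [mul_comm]

/-- The width of the `i`-th cell of a moving partition at the real time `h`. -/
def cellWidth (θ : ℕ → ℂ → ℂ) (i : ℕ) (h : ℝ) : ℝ := (θ (i + 1) h - θ i h).re

/-- The mean of `H` at the real time `h` over the `i`-th cell of a moving partition of the fibre
above the curve `X`. -/
noncomputable def cellMean (H : (Fin (n + 1) → ℝ) → ℝ) (X : ℂ → Fin n → ℂ) (θ : ℕ → ℂ → ℂ) (i : ℕ)
    (h : ℝ) : ℝ :=
  ∫ t in (0 : ℝ)..1, H (Fin.cons ((θ i h).re + t * cellWidth θ i h) (realPoint X h))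

theorem intervalIntegrable_cell (hH : Measurable H) (hB : ∀ x, |H x| ≤ B) (i : ℕ) (h : ℝ) :
    IntervalIntegrable (fun t : ℝ =>
      H (Fin.cons ((θ i h).re + t * cellWidth θ i h) (realPoint X h))) volume 0 1 := by
  refine intervalIntegrable_of_abs_le (hH.comp ?_) (fun t => hB _) _ _
  exact (measurable_cons _).comp ((measurable_id.mul_const _).const_add _)

theorem cellMean_nonneg (hH0 : ∀ x, 0 ≤ H x) (i : ℕ) (h : ℝ) : 0 ≤ cellMean H X θ i h :=
  intervalIntegral.integral_nonneg zero_le_one fun _ _ => hH0 _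

namespace IsSteadyPartition

section Width

variable {R : Type*} [CommRing R] {ψ : ℂ → R →+* ℂ} {G : Finset R[X]}

theorem integral_cons_eq_sum_cellMean (hθ : IsSteadyPartition ψ G ρ M θ) (hH : Measurable H)
    (hB : ∀ x, |H x| ≤ B) {h : ℝ} (hh : |h| < ρ) :
    ∫ y in (0 : ℝ)..1, H (Fin.cons y (realPoint X h)) =
      ∑ i ∈ Finset.range M, cellMean H X θ i h * cellWidth θ i h := by
  have hmem : (h : ℂ) ∈ ball (0 : ℂ) ρ := by simpa using hh
  exact integral_cons_eq_sum hH hB _ (fun i => (θ i h).re) (by simp [hθ.first _ hmem])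
    (by simp [hθ.last _ hmem])

theorem cellWidth_pos (hθ : IsSteadyPartition ψ G ρ M θ) {i : ℕ} (hi : i < M) :
    0 < cellWidth θ i 0 := by simpa [cellWidth] using hθ.gap_pos i hi

theorem norm_gap_zero (hθ : IsSteadyPartition ψ G ρ M θ) (hρ : 0 < ρ) {i : ℕ} (hi : i < M) :
    ‖θ (i + 1) 0 - θ i 0‖ = cellWidth θ i 0 := by
  have hreal : conj (θ (i + 1) 0 - θ i 0) = θ (i + 1) 0 - θ i 0 := by
    have hleft := hθ.map_conj i hi.le 0 (mem_ball_self hρ)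
    have hright := hθ.map_conj (i + 1) hi 0 (mem_ball_self hρ)
    rw [map_zero] at hleft hright
    rw [map_sub, ← hleft, ← hright]
  rw [← Complex.conj_eq_iff_re.1 hreal, Complex.norm_real, Real.norm_eq_abs,
    abs_of_pos (hθ.gap_pos i hi)]
  simp [cellWidth]

theorem abs_cellWidth_sub_le (hθ : IsSteadyPartition ψ G ρ M θ) {i : ℕ} (hi : i < M) {h : ℝ}
    (hh : |h| < ρ) : |cellWidth θ i h - cellWidth θ i 0| ≤ 1 / 2 * (|h| / ρ) * cellWidth θ i 0 := by
  have hsteady := (hθ.gap i hi).norm_sub_le (τ := h) (by simpa using hh)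
  rw [hθ.norm_gap_zero ((abs_nonneg h).trans_lt hh) hi, Complex.norm_real, Real.norm_eq_abs]
    at hsteady
  refine le_trans ?_ hsteady
  simpa [cellWidth] using Complex.abs_re_le_norm (θ (i + 1) h - θ i h - (θ (i + 1) 0 - θ i 0))

theorem abs_cellWidth_second_diff_le (hθ : IsSteadyPartition ψ G ρ M θ) {i : ℕ} (hi : i < M)
    {h : ℝ} (hh : |h| < ρ) :
    |cellWidth θ i h + cellWidth θ i (-h) - 2 * cellWidth θ i 0| ≤
      (|h| / ρ) ^ 2 * cellWidth θ i 0 := by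
  have hsteady := (hθ.gap i hi).norm_second_diff_le (τ := h) (by simpa using hh)
  rw [hθ.norm_gap_zero ((abs_nonneg h).trans_lt hh) hi, Complex.norm_real, Real.norm_eq_abs]
    at hsteady
  refine le_trans ?_ (hsteady.trans_eq (by ring))
  simpa [cellWidth] using Complex.abs_re_le_norm
    (θ (i + 1) h - θ i h + (θ (i + 1) (-h) - θ i (-h)) - 2 * (θ (i + 1) 0 - θ i 0))

end Width

variable {c K h : ℝ} {i : ℕ}
  (hθ : IsSteadyPartition (fun τ => complexEval φ (X τ))
    (F.map (MvPolynomial.finSuccEquiv A n).toEquiv.toEmbedding) ρ M θ)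
include hθ

theorem abs_cellMean_sub_le (hX : IsGoodCurve φ F' X) (hρ : 0 < ρ) (hρ₁ : ρ ≤ 1)
    (hB : ∀ x, |H x| ≤ B) (hHm : Measurable H) (hH : IsTame φ F c K H) (hi : i < M)
    (hh : |h / ρ| < c) :
    |cellMean H X θ i h - cellMean H X θ i 0| ≤ K * (|h| / ρ) * cellMean H X θ i 0 := by
  have hint := intervalIntegrable_cell (X := X) (θ := θ) hHm hB i
  rw [cellMean, cellMean, ← intervalIntegral.integral_sub (hint h) (hint 0)]
  refine abs_intervalIntegral_le zero_le_one (hint 0) fun t ht => ?_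
  have hfirst := hH.first _ (isGoodCurve_liftCurve hX hθ hρ hρ₁ hi ht) (h / ρ) hh
  rwa [← zero_div ρ, realPoint_liftCurve hρ.ne', realPoint_liftCurve hρ.ne', abs_div,
    abs_of_pos hρ] at hfirst

theorem abs_cellMean_second_diff_le (hX : IsGoodCurve φ F' X) (hρ : 0 < ρ) (hρ₁ : ρ ≤ 1)
    (hB : ∀ x, |H x| ≤ B) (hHm : Measurable H) (hH : IsTame φ F c K H) (hi : i < M)
    (hh : |h / ρ| < c) :
    |cellMean H X θ i h + cellMean H X θ i (-h) - 2 * cellMean H X θ i 0| ≤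
      K * (|h| / ρ) ^ 2 * cellMean H X θ i 0 := by
  have hint := intervalIntegrable_cell (X := X) (θ := θ) hHm hB i
  rw [cellMean, cellMean, cellMean, ← intervalIntegral.integral_add (hint h) (hint (-h)),
    ← intervalIntegral.integral_const_mul, ← intervalIntegral.integral_sub
      ((hint h).add (hint (-h))) ((hint 0).const_mul 2)]
  refine abs_intervalIntegral_le zero_le_one (hint 0) fun t ht => ?_
  have hsecond := hH.second _ (isGoodCurve_liftCurve hX hθ hρ hρ₁ hi ht) (h / ρ) hh
  rwa [← zero_div ρ, ← neg_div, realPoint_liftCurve hρ.ne', realPoint_liftCurve hρ.ne',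
    realPoint_liftCurve hρ.ne', abs_div, abs_of_pos hρ] at hsecond

theorem abs_integral_cons_sub_le (hX : IsGoodCurve φ F' X) (hρ : 0 < ρ) (hρ₁ : ρ ≤ 1)
    (hH0 : ∀ x, 0 ≤ H x) (hB : ∀ x, |H x| ≤ B) (hHm : Measurable H) (hH : IsTame φ F c K H)
    (hh : |h| < ρ) (hhc : |h / ρ| < c) :
    |(∫ y in (0 : ℝ)..1, H (Fin.cons y (realPoint X h))) -
        ∫ y in (0 : ℝ)..1, H (Fin.cons y (realPoint X 0))| ≤
      (2 * K + 1) * (|h| / ρ) * ∫ y in (0 : ℝ)..1, H (Fin.cons y (realPoint X 0)) := by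
  rw [hθ.integral_cons_eq_sum_cellMean hHm hB hh,
    hθ.integral_cons_eq_sum_cellMean hHm hB (h := 0) (by simpa using hρ),
    ← Finset.sum_sub_distrib, Finset.mul_sum]
  refine (Finset.abs_sum_le_sum_abs _ _).trans (Finset.sum_le_sum fun i hi => ?_)
  rw [Finset.mem_range] at hi
  exact abs_mul_sub_le ((div_le_one hρ).2 hh.le) (cellMean_nonneg hH0 _ _) (hθ.cellWidth_pos hi).le
    (hθ.abs_cellMean_sub_le hX hρ hρ₁ hB hHm hH hi hhc) (hθ.abs_cellWidth_sub_le hi hh)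

theorem abs_integral_cons_second_diff_le (hX : IsGoodCurve φ F' X) (hρ : 0 < ρ) (hρ₁ : ρ ≤ 1)
    (hH0 : ∀ x, 0 ≤ H x) (hB : ∀ x, |H x| ≤ B) (hHm : Measurable H) (hH : IsTame φ F c K H)
    (hh : |h| < ρ) (hhc : |h / ρ| < c) :
    |(∫ y in (0 : ℝ)..1, H (Fin.cons y (realPoint X h))) +
        (∫ y in (0 : ℝ)..1, H (Fin.cons y (realPoint X (-h)))) -
        2 * ∫ y in (0 : ℝ)..1, H (Fin.cons y (realPoint X 0))| ≤
      (2 * K + 1) * (|h| / ρ) ^ 2 * ∫ y in (0 : ℝ)..1, H (Fin.cons y (realPoint X 0)) := by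
  have hh' : |-h| < ρ := by rwa [abs_neg]
  have hhc' : |-h / ρ| < c := by rwa [neg_div, abs_neg]
  rw [hθ.integral_cons_eq_sum_cellMean hHm hB hh, hθ.integral_cons_eq_sum_cellMean hHm hB hh',
    hθ.integral_cons_eq_sum_cellMean hHm hB (h := 0) (by simpa using hρ),
    Finset.mul_sum, ← Finset.sum_add_distrib, ← Finset.sum_sub_distrib, Finset.mul_sum]
  refine (Finset.abs_sum_le_sum_abs _ _).trans (Finset.sum_le_sum fun i hi => ?_)
  rw [Finset.mem_range] at hi
  exact abs_mul_second_diff_le (cellMean_nonneg hH0 _ _) (hθ.cellWidth_pos hi).le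
    (hθ.abs_cellMean_sub_le hX hρ hρ₁ hB hHm hH hi hhc)
    (by simpa only [abs_neg] using hθ.abs_cellMean_sub_le hX hρ hρ₁ hB hHm hH hi hhc')
    (hθ.abs_cellWidth_sub_le hi hh)
    (by simpa only [abs_neg] using hθ.abs_cellWidth_sub_le hi hh')
    (hθ.abs_cellMean_second_diff_le hX hρ hρ₁ hB hHm hH hi hhc)
    (hθ.abs_cellWidth_second_diff_le hi hh)

end IsSteadyPartition

theorem exists_isTame_integral [IsDomain A] (F : Finset (MvPolynomial (Fin (n + 1)) A))
    (hF : (0 : MvPolynomial (Fin (n + 1)) A) ∉ F) :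
    ∃ F' : Finset (MvPolynomial (Fin n) A), (0 : MvPolynomial (Fin n) A) ∉ F' ∧ ∃ ρ > 0,
      ∀ (φ : A →+* ℝ) (H : (Fin (n + 1) → ℝ) → ℝ) (c K B : ℝ), 0 ≤ K → (∀ x, 0 ≤ H x) →
        (∀ x, |H x| ≤ B) → Measurable H → IsTame φ F c K H →
        IsTame φ F' (ρ * min c 1) ((2 * K + 1) / ρ ^ 2)
          fun x => ∫ y in (0 : ℝ)..1, H (Fin.cons y x) := by
  obtain ⟨F', hF', ρ, hρ, hρ₁, hpart⟩ := exists_isSteadyPartition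
    (F.map (MvPolynomial.finSuccEquiv A n).toEquiv.toEmbedding) (by
      simp only [Finset.mem_map_equiv]
      simpa using hF)
  refine ⟨F', hF', ρ, hρ, fun φ H c K B hK hH0 hB hHm hH => ?_⟩
  have hlt : ∀ {h : ℝ}, |h| < ρ * min c 1 → |h| < ρ ∧ |h / ρ| < c := fun {h} hh => by
    have hmin : |h| / ρ < min c 1 := (div_lt_iff₀' hρ).2 hh
    rw [abs_div, abs_of_pos hρ]
    exact ⟨(div_lt_one hρ).1 (hmin.trans_le (min_le_right _ _)), hmin.trans_le (min_le_left _ _)⟩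
  have hpartition : ∀ {X : ℂ → Fin n → ℂ}, IsGoodCurve φ F' X → ∃ M θ,
      IsSteadyPartition (fun τ => complexEval φ (X τ))
        (F.map (MvPolynomial.finSuccEquiv A n).toEquiv.toEmbedding) ρ M θ := fun {X} hX => by
    refine hpart _ _ hX.isHoloFamily fun f hf => ⟨fun h0 => hX.ne_zero f hf ?_, hX.steady f hf⟩
    rw [hX.isHoloFamily.at_zero, h0, Complex.ofReal_zero]
  refine ⟨fun X hX h hh => ?_, fun X hX h hh => ?_⟩ <;> obtain ⟨M, θ, hθ⟩ := hpartition hX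
  · refine (hθ.abs_integral_cons_sub_le hX hρ hρ₁ hH0 hB hHm hH (hlt hh).1 (hlt hh).2).trans ?_
    refine mul_le_mul_of_nonneg_right ?_
      (intervalIntegral.integral_nonneg zero_le_one fun t _ => hH0 _)
    have hinv : ρ⁻¹ ≤ (ρ ^ 2)⁻¹ :=
      inv_anti₀ (by positivity) (pow_le_of_le_one hρ.le hρ₁ two_ne_zero)
    rw [div_eq_mul_inv, div_eq_mul_inv, mul_assoc, mul_comm |h|]
    gcongr
  · refine (hθ.abs_integral_cons_second_diff_le hX hρ hρ₁ hH0 hB hHm hH (hlt hh).1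
      (hlt hh).2).trans_eq ?_
    ring

theorem integrableOn_Icc_of_abs_le {m : ℕ} {f : (Fin m → ℝ) → ℝ} (hf : Measurable f)
    (hB : ∀ x, |f x| ≤ B) : IntegrableOn f (Icc 0 1) :=
  Measure.integrableOn_of_bounded (M := B) isCompact_Icc.measure_lt_top.ne hf.aestronglyMeasurable
    (ae_of_all _ hB)

theorem integral_Icc_cons (hH : Measurable H) (hB : ∀ x, |H x| ≤ B) :
    ∫ ξ in Icc (0 : Fin n → ℝ) 1, ∫ y in (0 : ℝ)..1, H (Fin.cons y ξ) =
      ∫ ξ in Icc (0 : Fin (n + 1) → ℝ) 1, H ξ := by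
  have he := (volume_preserving_piFinSuccAbove (fun _ : Fin (n + 1) => ℝ) 0).symm
  have hpre : (MeasurableEquiv.piFinSuccAbove (fun _ : Fin (n + 1) => ℝ) 0).symm ⁻¹'
      Icc (0 : Fin (n + 1) → ℝ) 1 = Icc (0 : ℝ) 1 ×ˢ Icc (0 : Fin n → ℝ) 1 := by
    ext ⟨y, ξ⟩
    simp [MeasurableEquiv.piFinSuccAbove, Pi.le_def, Fin.forall_fin_succ]
  have hint := integrableOn_Icc_of_abs_le hH hB
  rw [← he.setIntegral_preimage_emb (MeasurableEquiv.measurableEmbedding _), hpre]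
  rw [← he.integrableOn_comp_preimage (MeasurableEquiv.measurableEmbedding _), hpre] at hint
  unfold IntegrableOn at hint
  rw [Measure.volume_eq_prod, ← Measure.prod_restrict] at hint ⊢
  have hsymm := integral_prod_symm _ hint
  simp only [Function.comp_apply] at hsymm
  rw [hsymm]
  refine integral_congr_ae (ae_of_all _ fun ξ => ?_)
  simp only [intervalIntegral.integral_of_le zero_le_one, integral_Icc_eq_integral_Ioc]
  simp [MeasurableEquiv.piFinSuccAbove, Fin.consEquiv]

theorem measurable_integral_cons (hH : Measurable H) :
    Measurable fun x : Fin n → ℝ => ∫ y in (0 : ℝ)..1, H (Fin.cons y x) := by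
  simp only [intervalIntegral.integral_of_le zero_le_one]
  refine (StronglyMeasurable.integral_prod_right (f := fun (x : Fin n → ℝ) (y : ℝ) =>
    H (Fin.cons y x)) ?_).measurable
  refine (hH.comp (measurable_pi_iff.2 fun i => ?_)).stronglyMeasurable
  cases i using Fin.cases with
  | zero => exact measurable_snd
  | succ i => exact (measurable_pi_apply i).comp measurable_fst

theorem abs_integral_cons_le (hB : ∀ x, |H x| ≤ B) (x : Fin n → ℝ) :
    |∫ y in (0 : ℝ)..1, H (Fin.cons y x)| ≤ B := by
  simpa using intervalIntegral.norm_integral_le_of_norm_le_const (a := 0) (b := 1) (C := B)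
    (f := fun y : ℝ => H (Fin.cons y x)) fun y _ => hB _

theorem measurable_snoc {m : ℕ} (x : ℝ) :
    Measurable fun ξ : Fin m → ℝ => (Fin.snoc (α := fun _ => ℝ) ξ x : Fin (m + 1) → ℝ) := by
  refine measurable_pi_iff.2 fun i => ?_
  cases i using Fin.lastCases with
  | last => simp
  | cast i => simpa using measurable_pi_apply i

theorem integral_Icc_fin_zero_snoc (H : (Fin 1 → ℝ) → ℝ) (x : Fin 1 → ℝ) :
    ∫ ξ in Icc (0 : Fin 0 → ℝ) 1, H (Fin.snoc (α := fun _ => ℝ) ξ (x 0)) = H x := by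
  have hIcc : Icc (0 : Fin 0 → ℝ) 1 = univ := by
    ext ξ
    simp [Subsingleton.elim ξ 0, Subsingleton.elim (1 : Fin 0 → ℝ) 0]
  have hsnoc : ∀ ξ : Fin 0 → ℝ, Fin.snoc (α := fun _ => ℝ) ξ (x 0) = x := fun ξ => by
    funext i
    obtain rfl : i = 0 := Subsingleton.elim (α := Fin 1) i 0
    rfl
  simp only [hsnoc, hIcc, Measure.restrict_univ]
  simp [Measure.volume_pi_eq_dirac 0]

theorem exists_isTame_integral_Icc [IsDomain A] (m : ℕ) :
    ∀ (F : Finset (MvPolynomial (Fin (m + 1)) A)), (0 : MvPolynomial (Fin (m + 1)) A) ∉ F →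
    ∀ c K : ℝ, 0 < c → 0 ≤ K →
    ∃ F' : Finset (MvPolynomial (Fin 1) A), (0 : MvPolynomial (Fin 1) A) ∉ F' ∧
      ∃ c' > 0, ∃ K' ≥ 0, ∀ (φ : A →+* ℝ) (H : (Fin (m + 1) → ℝ) → ℝ) (B : ℝ), (∀ x, 0 ≤ H x) →
        (∀ x, |H x| ≤ B) → Measurable H → IsTame φ F c K H →
        IsTame φ F' c' K' fun x => ∫ ξ in Icc (0 : Fin m → ℝ) 1,
          H (Fin.snoc (α := fun _ => ℝ) ξ (x 0)) := by
  induction m with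
  | zero =>
    intro F hF c K hc hK
    refine ⟨F, hF, c, hc, K, hK, fun φ H B _ _ _ hH => ?_⟩
    simpa only [integral_Icc_fin_zero_snoc] using hH
  | succ m ih =>
    intro F hF c K hc hK
    obtain ⟨F₁, hF₁, ρ, hρ, hfirst⟩ := exists_isTame_integral F hF
    obtain ⟨F', hF', c', hc', K', hK', hrest⟩ := ih F₁ hF₁ (ρ * min c 1) ((2 * K + 1) / ρ ^ 2)
      (mul_pos hρ (lt_min hc one_pos)) (by positivity)
    refine ⟨F', hF', c', hc', K', hK', fun φ H B hH0 hB hHm hH => ?_⟩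
    have htame := hrest φ _ B
      (fun x => intervalIntegral.integral_nonneg zero_le_one fun t _ => hH0 (Fin.cons t x))
      (abs_integral_cons_le hB) (measurable_integral_cons hHm) (hfirst φ H c K B hK hH0 hB hHm hH)
    convert htame using 2 with x
    simp only [Fin.cons_snoc_eq_snoc_cons]
    exact (integral_Icc_cons (hHm.comp (measurable_snoc (x 0))) fun ξ => hB _).symm

end TameIntegral

/-! ### Tame functions of one variable -/

theorem steady_prod_sub (t : ℂ) {δ : ℝ} (hδ : 0 ≤ δ) (Z : Multiset ℂ) :
    (∀ z ∈ Z, δ ≤ ‖t - z‖) →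
      Steady 1 (2 ^ Multiset.card Z - 1) fun τ => (Z.map fun z => t + δ * τ - z).prod := by
  induction Z using Multiset.induction_on with
  | empty =>
    intro _
    simpa using Steady.const 1 1
  | cons z Z ih =>
    intro hZ
    have hfactor : Steady 1 1 fun τ => t + δ * τ - z := by
      refine ⟨by fun_prop, fun τ hτ => ?_⟩
      rw [mem_ball_zero_iff] at hτ
      have hdiff : t + δ * τ - z - (t + δ * 0 - z) = δ * τ := by ring
      rw [hdiff, mul_zero, add_zero, norm_mul, Complex.norm_real, Real.norm_eq_abs,
        abs_of_nonneg hδ]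
      have hz := hZ z (Multiset.mem_cons_self _ _)
      nlinarith [norm_nonneg τ]
    have hprod := hfactor.mul (ih fun w hw => hZ w (Multiset.mem_cons_of_mem hw))
    simp only [Multiset.map_cons, Multiset.prod_cons, Multiset.card_cons]
    convert hprod using 1
    ring

theorem steady_eval_of_le_norm_sub_root (t : ℂ) {δ : ℝ} (hδ : 0 ≤ δ) {p : ℂ[X]} {N : ℕ}
    (hN : p.natDegree ≤ N) (hp : ∀ z ∈ p.roots, δ ≤ ‖t - z‖) :
    Steady 1 (1 / 2) fun τ => p.eval (t + ((1 / 2 : ℝ) ^ (N + 1) * δ : ℝ) * τ) := by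
  have hprod := (Steady.const 1 p.leadingCoeff).mul (steady_prod_sub t hδ p.roots hp)
  have hcard : (1 + 0) * (1 + (2 ^ Multiset.card p.roots - 1)) - 1 ≤ (2 : ℝ) ^ N := by
    have : (2 : ℝ) ^ Multiset.card p.roots ≤ 2 ^ N :=
      pow_le_pow_right₀ one_le_two ((card_roots' p).trans hN)
    linarith
  have hslow := ((hprod.mono le_rfl hcard).shrink one_pos (by positivity)
    (pow_le_one₀ (n := N + 1) (by norm_num) (by norm_num : (1 / 2 : ℝ) ≤ 1))).comp_mul
      (by positivity)
  have hhalf : (1 / 2 : ℝ) ^ (N + 1) * 2 ^ N = 1 / 2 := by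
    rw [pow_succ, mul_right_comm, ← mul_pow]
    norm_num
  rw [hhalf] at hslow
  refine hslow.congr one_pos fun τ _ => ?_
  simp only [(IsAlgClosed.splits p).eval_eq_prod_roots]
  congr 2
  refine Multiset.map_congr rfl fun z _ => ?_
  push_cast
  ring

/-- The sum of the Lorentz (Cauchy) kernels centred at the real parts of the points of `Z`. -/
noncomputable def lorentzSum (Z : Multiset ℂ) (t : ℝ) : ℝ :=
  (Z.map fun z => (1 + (t - z.re) ^ 2)⁻¹).sum

theorem inv_one_add_sq_le_lorentzSum {Z : Multiset ℂ} {z : ℂ} (hz : z ∈ Z) (t : ℝ) :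
    (1 + ‖(t : ℂ) - z‖ ^ 2)⁻¹ ≤ lorentzSum Z t := by
  have hre : (t - z.re) ^ 2 ≤ ‖(t : ℂ) - z‖ ^ 2 := by
    rw [← sq_abs]
    have := Complex.abs_re_le_norm ((t : ℂ) - z)
    simp only [Complex.sub_re, Complex.ofReal_re] at this
    gcongr
  refine le_trans (by gcongr) (Multiset.single_le_sum (fun x hx => ?_) _
    (Multiset.mem_map_of_mem (fun z : ℂ => (1 + (t - z.re) ^ 2)⁻¹) hz))
  obtain ⟨w, _, rfl⟩ := Multiset.mem_map.1 hx
  positivity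

theorem lorentzSum_zero : lorentzSum 0 = 0 := rfl

theorem lorentzSum_cons (z : ℂ) (Z : Multiset ℂ) :
    lorentzSum (z ::ₘ Z) = fun t => (1 + (t - z.re) ^ 2)⁻¹ + lorentzSum Z t := by
  funext t
  simp [lorentzSum]

theorem integrable_lorentzSum (Z : Multiset ℂ) : Integrable (lorentzSum Z) := by
  induction Z using Multiset.induction_on with
  | empty => exact lorentzSum_zero ▸ integrable_zero ..
  | cons z Z ih =>
    rw [lorentzSum_cons]
    exact (integrable_inv_one_add_sq.comp_sub_right z.re).add ih

theorem integral_lorentzSum (Z : Multiset ℂ) :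
    ∫ t : ℝ, lorentzSum Z t = Multiset.card Z * π := by
  induction Z using Multiset.induction_on with
  | empty => simp [lorentzSum_zero]
  | cons z Z ih =>
    rw [lorentzSum_cons, Multiset.card_cons,
      integral_add (integrable_inv_one_add_sq.comp_sub_right z.re) (integrable_lorentzSum Z), ih,
      integral_sub_right_eq_self (fun t : ℝ => (1 + t ^ 2)⁻¹), integral_univ_inv_one_add_sq]
    push_cast
    ring

theorem le_mul_lorentzSum {Z : Multiset ℂ} (hZ : Z ≠ 0) {t D S L δ₀ : ℝ} (hS : 0 ≤ S) (hL : 0 ≤ L)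
    (hδ₀ : 0 < δ₀) (hnear : D ≤ 2 * S)
    (hfar : ∀ δ, δ₀ < δ → (∀ z ∈ Z, δ ≤ ‖(t : ℂ) - z‖) → D ≤ L / δ ^ 2 * S) :
    D ≤ (2 * (1 + δ₀ ^ 2) + L * (1 + 1 / δ₀ ^ 2)) * S * lorentzSum Z t := by
  classical
  obtain ⟨z, hz, hmin⟩ := Z.toFinset.exists_min_image (fun z => ‖(t : ℂ) - z‖)
    (Multiset.toFinset_nonempty.2 hZ)
  rw [Multiset.mem_toFinset] at hz
  set δ := ‖(t : ℂ) - z‖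
  refine le_trans ?_
    (mul_le_mul_of_nonneg_left (inv_one_add_sq_le_lorentzSum hz t) (by positivity))
  rw [← div_eq_mul_inv, le_div_iff₀ (by positivity)]
  rcases le_or_gt δ δ₀ with hle | hlt
  · calc D * (1 + δ ^ 2) ≤ 2 * S * (1 + δ₀ ^ 2) := by gcongr
      _ ≤ (2 * (1 + δ₀ ^ 2) + L * (1 + 1 / δ₀ ^ 2)) * S := by
        have : 0 ≤ L * (1 + 1 / δ₀ ^ 2) * S := by positivity
        linarith
  · have hδ : 0 < δ := hδ₀.trans hlt
    have hsq : 1 + δ ^ 2 ≤ (1 + 1 / δ₀ ^ 2) * δ ^ 2 := by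
      have : 1 ≤ 1 / δ₀ ^ 2 * δ ^ 2 := by
        rw [div_mul_eq_mul_div, one_mul, le_div_iff₀ (by positivity), one_mul]
        gcongr
      linarith
    calc D * (1 + δ ^ 2) ≤ L / δ ^ 2 * S * ((1 + 1 / δ₀ ^ 2) * δ ^ 2) := by
          gcongr
          exact hfar δ hlt fun w hw => hmin w (Multiset.mem_toFinset.2 hw)
      _ = L * (1 + 1 / δ₀ ^ 2) * S := by field_simp
      _ ≤ (2 * (1 + δ₀ ^ 2) + L * (1 + 1 / δ₀ ^ 2)) * S := by
        have : 0 ≤ 2 * (1 + δ₀ ^ 2) * S := by positivity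
        linarith

section Univariate

variable {A : Type*} [CommRing A]

/-- Polynomials in one variable, as univariate polynomials. -/
noncomputable def toUnivariate : MvPolynomial (Fin 1) A ≃+* A[X] :=
  (MvPolynomial.finSuccEquiv A 0).toRingEquiv.trans
    (Polynomial.mapEquiv (MvPolynomial.isEmptyRingEquiv A (Fin 0)))

theorem complexEval_const (φ : A →+* ℝ) (z : ℂ) (f : MvPolynomial (Fin 1) A) :
    complexEval φ (fun _ => z) f =
      ((toUnivariate f).map (Complex.ofRealHom.comp φ)).eval z := by
  have hcons : (fun _ : Fin 1 => z) = Fin.cons z (Fin.elim0 : Fin 0 → ℂ) := by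
    funext i
    fin_cases i
    rfl
  rw [hcons, complexEval_cons, toUnivariate, RingEquiv.trans_apply, Polynomial.mapEquiv_apply,
    Polynomial.map_map]
  congr 2
  refine MvPolynomial.ringHom_ext (fun a => ?_) (fun i => i.elim0)
  have : MvPolynomial.isEmptyRingEquiv A (Fin 0) (MvPolynomial.C a) = a :=
    (MvPolynomial.isEmptyAlgEquiv A (Fin 0)).commutes a
  simp [complexEval, this]

/-- The complex roots of a polynomial in one variable, its coefficients being made real by `φ`. -/
noncomputable def complexRoots (φ : A →+* ℝ) (f : MvPolynomial (Fin 1) A) : Multiset ℂ :=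
  ((toUnivariate f).map (Complex.ofRealHom.comp φ)).roots

theorem card_complexRoots_le (φ : A →+* ℝ) (f : MvPolynomial (Fin 1) A) :
    Multiset.card (complexRoots φ f) ≤ (toUnivariate f).natDegree :=
  (card_roots' _).trans natDegree_map_le

variable {φ : A →+* ℝ} {F : Finset (MvPolynomial (Fin 1) A)} {N : ℕ}

theorem isGoodCurve_segment (hN : ∀ f ∈ F, (toUnivariate f).natDegree ≤ N)
    (hφ : ∀ f ∈ F, φ (toUnivariate f).leadingCoeff ≠ 0) {t δ : ℝ} (hδ : 0 < δ)
    (hroots : ∀ f ∈ F, ∀ z ∈ complexRoots φ f, δ ≤ ‖(t : ℂ) - z‖) :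
    IsGoodCurve φ F fun τ _ => (t : ℂ) + ((1 / 2 : ℝ) ^ (N + 1) * δ : ℝ) * τ := by
  refine ⟨fun _ => by fun_prop, fun _ τ _ => ?_, fun f hf => ?_, fun f hf => ?_⟩
  · rw [map_add, map_mul, Complex.conj_ofReal, Complex.conj_ofReal]
  · have hmap : (toUnivariate f).map (Complex.ofRealHom.comp φ) ≠ 0 := by
      rw [← leadingCoeff_ne_zero, leadingCoeff_map_of_leadingCoeff_ne_zero] <;>
        simpa using hφ f hf
    rw [complexEval_const, mul_zero, add_zero]
    intro heval
    have hle := hroots f hf t ((mem_roots hmap).2 heval)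
    rw [sub_self, norm_zero] at hle
    linarith
  · simp only [complexEval_const]
    exact steady_eval_of_le_norm_sub_root t hδ.le (natDegree_map_le.trans (hN f hf)) (hroots f hf)

theorem IsTame.abs_second_diff_le {c K : ℝ} {G : ℝ → ℝ} (hG : IsTame φ F c K fun x => G (x 0))
    (hN : ∀ f ∈ F, (toUnivariate f).natDegree ≤ N)
    (hφ : ∀ f ∈ F, φ (toUnivariate f).leadingCoeff ≠ 0) {t δ s : ℝ} (hδ : 0 < δ)
    (hroots : ∀ f ∈ F, ∀ z ∈ complexRoots φ f, δ ≤ ‖(t : ℂ) - z‖)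
    (hs : |s| < (1 / 2) ^ (N + 1) * δ * c) :
    |G (t + s) + G (t - s) - 2 * G t| ≤ K * (s / ((1 / 2) ^ (N + 1) * δ)) ^ 2 * G t := by
  have hpos : 0 < (1 / 2 : ℝ) ^ (N + 1) * δ := by positivity
  have hsecond := hG.second _ (isGoodCurve_segment hN hφ hδ hroots)
    (s / ((1 / 2) ^ (N + 1) * δ)) (by
      rw [abs_div, abs_of_pos hpos, div_lt_iff₀ hpos]
      linarith)
  simpa only [realPoint, Complex.add_re, Complex.re_ofReal_mul, Complex.ofReal_re, mul_zero,
    add_zero, mul_neg, mul_div_cancel₀ _ hpos.ne', ← sub_eq_add_neg, sq_abs] using hsecond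

theorem IsTame.abs_second_diff_le_lorentzSum {c K ε : ℝ} {G : ℝ → ℝ} {S : ℝ} {Z : Multiset ℂ}
    (hT : IsTame φ F c K fun x => G (x 0)) (hc : 0 < c) (hK : 0 ≤ K) (hG : ∀ t, 0 ≤ G t)
    (hGS : ∀ t, G t ≤ S) (hN : ∀ f ∈ F, (toUnivariate f).natDegree ≤ N)
    (hφ : ∀ f ∈ F, φ (toUnivariate f).leadingCoeff ≠ 0) (hZ : Z ≠ 0)
    (hroots : ∀ f ∈ F, ∀ z ∈ complexRoots φ f, z ∈ Z) (hε : ε = (1 / 2) ^ (N + 1)) (t : ℝ) :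
    |G (t + 1 / 2) + G (t - 1 / 2) - 2 * G t| ≤
      (2 * (1 + (1 / (2 * ε * c)) ^ 2) + K / (4 * ε ^ 2) * (1 + 1 / (1 / (2 * ε * c)) ^ 2)) * S *
        lorentzSum Z t := by
  have hε₀ : 0 < ε := hε ▸ by positivity
  refine le_mul_lorentzSum hZ ((hG 0).trans (hGS 0)) (by positivity) (by positivity) ?_
    fun δ hδ hδZ => ?_
  · rw [abs_le]
    constructor <;> linarith [hG (t + 1 / 2), hG (t - 1 / 2), hG t, hGS (t + 1 / 2),
      hGS (t - 1 / 2), hGS t]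
  · have hδ₀ : 0 < δ := lt_trans (by positivity) hδ
    rw [div_lt_iff₀ (by positivity)] at hδ
    refine (hT.abs_second_diff_le hN hφ hδ₀ (fun f hf z hz => hδZ z (hroots f hf z hz)) ?_).trans ?_
    · rw [abs_of_pos one_half_pos, ← hε]
      linarith
    · calc K * (1 / 2 / ((1 / 2) ^ (N + 1) * δ)) ^ 2 * G t
          ≤ K * (1 / 2 / ((1 / 2) ^ (N + 1) * δ)) ^ 2 * S := by gcongr; exact hGS t
        _ = K / (4 * ε ^ 2) / δ ^ 2 * S := by rw [← hε]; field_simp; ring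

theorem exists_second_diff_bound [IsDomain A] (F : Finset (MvPolynomial (Fin 1) A))
    (hF : (0 : MvPolynomial (Fin 1) A) ∉ F) {c K : ℝ} (hc : 0 < c) (hK : 0 ≤ K) :
    ∃ w : A, w ≠ 0 ∧ ∃ C ≥ 0, ∀ φ : A →+* ℝ, φ w ≠ 0 → ∀ (G : ℝ → ℝ) (S : ℝ),
      (∀ t, 0 ≤ G t) → (∀ t, G t ≤ S) → IsTame φ F c K (fun x => G (x 0)) →
      ∃ b : ℝ → ℝ, Integrable b ∧ (∀ t, |G (t + 1 / 2) + G (t - 1 / 2) - 2 * G t| ≤ b t) ∧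
        ∫ t, b t ≤ C * S := by
  set N := ∑ f ∈ F, (toUnivariate f).natDegree
  obtain ⟨ε, hε⟩ : ∃ ε : ℝ, ε = (1 / 2) ^ (N + 1) := ⟨_, rfl⟩
  have hε₀ : 0 < ε := hε ▸ by positivity
  refine ⟨∏ f ∈ F, (toUnivariate f).leadingCoeff, Finset.prod_ne_zero_iff.2 fun f hf =>
    leadingCoeff_ne_zero.2 ((map_ne_zero_iff _ toUnivariate.injective).2 fun h => hF (h ▸ hf)),
    (2 * (1 + (1 / (2 * ε * c)) ^ 2) + K / (4 * ε ^ 2) * (1 + 1 / (1 / (2 * ε * c)) ^ 2)) *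
      ((N + 1) * π), by positivity, fun φ hφ G S hG hGS hT => ?_⟩
  rw [map_prod, Finset.prod_ne_zero_iff] at hφ
  have hS : 0 ≤ S := (hG 0).trans (hGS 0)
  have hN : ∀ f ∈ F, (toUnivariate f).natDegree ≤ N := fun f hf =>
    Finset.single_le_sum (f := fun f => (toUnivariate f).natDegree) (fun _ _ => Nat.zero_le _) hf
  -- `0` is adjoined to have a Lorentz kernel even if no polynomial in `F` has a root.
  set Z : Multiset ℂ := 0 ::ₘ ∑ f ∈ F, complexRoots φ f
  have hcard : (Multiset.card Z : ℝ) ≤ N + 1 := by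
    rw [Multiset.card_cons, Multiset.card_sum]
    exact_mod_cast Nat.add_le_add_right (Finset.sum_le_sum fun f _ => card_complexRoots_le φ f) 1
  refine ⟨_, (integrable_lorentzSum Z).const_mul _,
    hT.abs_second_diff_le_lorentzSum hc hK hG hGS hN hφ Multiset.cons_ne_zero
      (fun f hf z hz => Multiset.mem_cons_of_mem (Multiset.mem_sum.2 ⟨f, hf, hz⟩)) hε, ?_⟩
  rw [integral_const_mul, integral_lorentzSum, mul_right_comm]
  gcongr

end Univariate

/-! ### Oscillatory integrals and windows -/

section Window

open scoped FourierTransform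

theorem fourierChar_add_half (t : ℝ) : (𝐞 (t + 1 / 2) : ℂ) = -𝐞 t := by
  have hhalf : (𝐞 (1 / 2) : ℂ) = -1 := by
    rw [fourierChar_apply, mul_one_div, mul_div_cancel_left₀ _ two_ne_zero, Complex.exp_pi_mul_I]
  rw [AddChar.map_add_eq_mul, Circle.coe_mul, hhalf, mul_neg_one]

theorem fourierChar_sub_half (t : ℝ) : (𝐞 (t - 1 / 2) : ℂ) = -𝐞 t := by
  rw [eq_neg_iff_add_eq_zero, ← neg_eq_iff_add_eq_zero, ← fourierChar_add_half, sub_add_cancel]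

theorem norm_fourierChar_sub_le (s t : ℝ) : ‖(𝐞 s : ℂ) - 𝐞 t‖ ≤ 2 * π * |s - t| :=
  convex_univ.norm_image_sub_le_of_norm_hasDerivWithin_le (f := fun x => (𝐞 x : ℂ))
    (fun x _ => (hasDerivAt_fourierChar x).hasDerivWithinAt)
    (fun x _ => by rw [norm_mul, Circle.norm_coe]; simp [abs_of_pos pi_pos])
    (mem_univ t) (mem_univ s)

theorem continuous_coe_fourierChar : Continuous fun t => (𝐞 t : ℂ) :=
  continuous_subtype_val.comp continuous_fourierChar

theorem integral_fourierChar_Icc (a : ℝ) :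
    ∫ t in Icc (a - 1 / 2) a, (𝐞 t : ℂ) = 𝐞 a / (π * Complex.I) := by
  have hne : (2 * π * Complex.I : ℂ) ≠ 0 := by simp [pi_ne_zero]
  have hprim (t : ℝ) : HasDerivAt (fun t => (𝐞 t : ℂ) / (2 * π * Complex.I)) (𝐞 t) t := by
    simpa only [mul_div_cancel_left₀ _ hne] using
      (hasDerivAt_fourierChar t).div_const (2 * π * Complex.I)
  rw [integral_Icc_eq_integral_Ioc, ← intervalIntegral.integral_of_le (by linarith),
    intervalIntegral.integral_eq_sub_of_hasDerivAt (fun t _ => hprim t)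
      (continuous_coe_fourierChar.intervalIntegrable _ _), fourierChar_sub_half]
  have : (π : ℂ) ≠ 0 := by simp [pi_ne_zero]
  field_simp
  ring

theorem integral_second_diff_mul_fourierChar {g : ℝ → ℝ}
    (hg : Integrable fun t => (g t : ℂ) * 𝐞 t) :
    ∫ t, ((g (t + 1 / 2) + g (t - 1 / 2) - 2 * g t : ℝ) : ℂ) * 𝐞 t =
      -4 * ∫ t, (g t : ℂ) * 𝐞 t := by
  have hshift (t : ℝ) : ((g (t + 1 / 2) + g (t - 1 / 2) - 2 * g t : ℝ) : ℂ) * 𝐞 t =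
      (-1) * (g (t + 1 / 2) * 𝐞 (t + 1 / 2)) + (-1) * (g (t - 1 / 2) * 𝐞 (t - 1 / 2)) +
        (-2) * (g t * 𝐞 t) := by
    rw [fourierChar_add_half, fourierChar_sub_half]
    push_cast
    ring
  have hadd := (hg.comp_add_right (1 / 2)).const_mul (-1)
  have hsub := (hg.comp_sub_right (1 / 2)).const_mul (-1)
  have hsum : Integrable fun t => (-1 : ℂ) * (g (t + 1 / 2) * 𝐞 (t + 1 / 2)) +
      (-1) * (g (t - 1 / 2) * 𝐞 (t - 1 / 2)) := hadd.add hsub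
  simp only [hshift]
  rw [integral_add hsum (hg.const_mul (-2)), integral_add hadd hsub,
    integral_const_mul, integral_const_mul, integral_const_mul,
    integral_add_right_eq_self (fun t => (g t : ℂ) * 𝐞 t),
    integral_sub_right_eq_self (fun t => (g t : ℂ) * 𝐞 t)]
  ring

variable {Ω : Type*}

/-- The pairs `(t, ω)` for which `q ω` lies in the window `[t, t + 1/2]`. -/
def window (q : Ω → ℝ) : Set (ℝ × Ω) := {p | q p.2 ∈ Icc p.1 (p.1 + 1 / 2)}

theorem mk_preimage_window_left (q : Ω → ℝ) (ω : Ω) :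
    (fun t => (t, ω)) ⁻¹' window q = Icc (q ω - 1 / 2) (q ω) := by
  ext t
  simp only [window, mem_preimage, mem_ofPred_eq, mem_Icc, tsub_le_iff_right]
  exact and_comm

theorem integral_indicator_window_left (q : Ω → ℝ) (ω : Ω) :
    ∫ t, (window q).indicator (fun p => (𝐞 p.1 : ℂ)) (t, ω) = 𝐞 (q ω) / (π * Complex.I) := by
  rw [← integral_fourierChar_Icc, ← integral_indicator measurableSet_Icc,
    ← mk_preimage_window_left]
  rfl

variable [MeasurableSpace Ω] {μ : Measure Ω} {q : Ω → ℝ}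

/-- The mass of the points where `q` lies in the window `[t, t + 1/2]`. The length `1/2` is chosen
because the character `𝐞` changes sign under translation by `1/2`. -/
noncomputable def windowMass (μ : Measure Ω) (q : Ω → ℝ) (t : ℝ) : ℝ :=
  μ.real (q ⁻¹' Icc t (t + 1 / 2))

theorem measurableSet_window (hq : Measurable q) : MeasurableSet (window q) :=
  (measurableSet_le measurable_fst (hq.comp measurable_snd)).inter
    (measurableSet_le (hq.comp measurable_snd) (measurable_fst.add_const _))

theorem integral_indicator_window_right (hq : Measurable q) (t : ℝ) :
    ∫ ω, (window q).indicator (fun p => (𝐞 p.1 : ℂ)) (t, ω) ∂μ = windowMass μ q t * 𝐞 t := by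
  have hslice : (fun ω => (window q).indicator (fun p => (𝐞 p.1 : ℂ)) (t, ω)) =
      (q ⁻¹' Icc t (t + 1 / 2)).indicator fun _ => (𝐞 t : ℂ) := rfl
  rw [hslice, integral_indicator_const _ (hq measurableSet_Icc), Complex.real_smul, windowMass]

variable [IsFiniteMeasure μ]

theorem integrable_indicator_window (hq : Measurable q) :
    Integrable ((window q).indicator fun p => (𝐞 p.1 : ℂ)) ((volume : Measure ℝ).prod μ) := by
  refine (integrable_indicator_iff (measurableSet_window hq)).2 ?_
  refine Measure.integrableOn_of_bounded (M := 1) ?_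
    (continuous_coe_fourierChar.measurable.comp measurable_fst).aestronglyMeasurable
    (ae_of_all _ fun p => (Circle.norm_coe _).le)
  rw [Measure.prod_apply_symm (measurableSet_window hq)]
  simp only [mk_preimage_window_left, Real.volume_Icc, sub_sub_cancel, lintegral_const]
  exact (ENNReal.mul_lt_top ENNReal.ofReal_lt_top (measure_lt_top _ _)).ne

theorem integrable_windowMass_mul_fourierChar (hq : Measurable q) :
    Integrable fun t => (windowMass μ q t : ℂ) * 𝐞 t := by
  simpa only [integral_indicator_window_right hq] using
    (integrable_indicator_window (μ := μ) hq).integral_prod_left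

theorem integral_windowMass_mul_fourierChar (hq : Measurable q) :
    ∫ t, (windowMass μ q t : ℂ) * 𝐞 t = (∫ ω, (𝐞 (q ω) : ℂ) ∂μ) / (π * Complex.I) := by
  have hswap := integral_integral_swap (f := fun t ω =>
    (window q).indicator (fun p => (𝐞 p.1 : ℂ)) (t, ω)) (integrable_indicator_window (μ := μ) hq)
  simp only [integral_indicator_window_right hq, integral_indicator_window_left] at hswap
  rw [hswap, integral_div]

theorem norm_integral_fourierChar_le (hq : Measurable q) {b : ℝ → ℝ} (hb : Integrable b)
    (hbound : ∀ t, |windowMass μ q (t + 1 / 2) + windowMass μ q (t - 1 / 2) -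
      2 * windowMass μ q t| ≤ b t) :
    ‖∫ ω, (𝐞 (q ω) : ℂ) ∂μ‖ ≤ π / 4 * ∫ t, b t := by
  have hle := norm_integral_le_of_norm_le (f := fun t => ((windowMass μ q (t + 1 / 2) +
      windowMass μ q (t - 1 / 2) - 2 * windowMass μ q t : ℝ) : ℂ) * 𝐞 t) hb
    (ae_of_all _ fun t => by
      rw [norm_mul, Circle.norm_coe, mul_one, Complex.norm_real]
      exact hbound t)
  rw [integral_second_diff_mul_fourierChar (integrable_windowMass_mul_fourierChar hq),
    integral_windowMass_mul_fourierChar hq, norm_mul, norm_div, norm_mul, Complex.norm_I,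
    Complex.norm_real, mul_one, Real.norm_of_nonneg pi_pos.le, norm_neg, Complex.norm_ofNat,
    mul_div_assoc', div_le_iff₀ pi_pos] at hle
  linarith

theorem coe_fourierChar_eq (t : ℝ) : (𝐞 t : ℂ) = Complex.exp (2 * π * Complex.I * t) := by
  rw [fourierChar_apply]
  push_cast
  ring_nf

variable {Ω : Type*} [MeasurableSpace Ω] {μ : Measure Ω} {q q' : Ω → ℝ}

theorem windowMass_le_of_abs_sub_le [IsFiniteMeasure μ] (h : ∀ᵐ ω ∂μ, |q' ω - q ω| ≤ 1 / 4)
    (t : ℝ) : windowMass μ q' t ≤ μ.real (q ⁻¹' Icc (t - 1 / 4) (t - 1 / 4 + 1)) := by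
  refine ENNReal.toReal_mono (measure_ne_top _ _) (measure_mono_ae ?_)
  filter_upwards [h] with ω hω hmem
  obtain ⟨hlow, hupp⟩ := abs_le.1 hω
  obtain ⟨hle, hge⟩ : t ≤ q' ω ∧ q' ω ≤ t + 1 / 2 := hmem
  exact ⟨by linarith, by linarith⟩

theorem norm_integral_fourierChar_sub_le [IsProbabilityMeasure μ] (hq : Measurable q)
    (hq' : Measurable q') {δ : ℝ} (h : ∀ᵐ ω ∂μ, |q' ω - q ω| ≤ δ) :
    ‖(∫ ω, (𝐞 (q' ω) : ℂ) ∂μ) - ∫ ω, (𝐞 (q ω) : ℂ) ∂μ‖ ≤ 2 * π * δ := by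
  have hint {p : Ω → ℝ} (hp : Measurable p) : Integrable (fun ω => (𝐞 (p ω) : ℂ)) μ :=
    .of_bound (continuous_coe_fourierChar.measurable.comp hp).aestronglyMeasurable 1
      (ae_of_all _ fun ω => (Circle.norm_coe _).le)
  rw [← integral_sub (hint hq') (hint hq)]
  refine (norm_integral_le_of_norm_le_const (C := 2 * π * δ) ?_).trans (by simp)
  filter_upwards [h] with ω hω
  exact (norm_fourierChar_sub_le _ _).trans (by gcongr)

theorem measureReal_restrict_preimage_Icc_le {K : Set Ω} (hK : MeasurableSet K) (hμK : μ K ≠ ∞)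
    (q : Ω → ℝ) (t : ℝ) : (μ.restrict K).real (q ⁻¹' Icc t (t + 1)) ≤
      (⨆ s : ℝ, μ {ω ∈ K | s ≤ q ω ∧ q ω ≤ s + 1}).toReal := by
  rw [measureReal_def, Measure.restrict_apply' hK, inter_comm]
  exact ENNReal.toReal_mono
    (ne_top_of_le_ne_top hμK (iSup_le fun s => measure_mono (sep_subset _ _)))
    (le_iSup (fun s : ℝ => μ {ω ∈ K | s ≤ q ω ∧ q ω ≤ s + 1}) t)

end Window

section Sign

theorem sign_eq_of_abs_sub_lt {a b : ℝ} (h : |a - b| < |b|) :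
    SignType.sign a = SignType.sign b := by
  rcases lt_trichotomy b 0 with hb | rfl | hb
  · rw [abs_of_neg hb, abs_lt] at h
    rw [sign_neg hb, sign_neg (by linarith)]
  · rw [abs_zero] at h
    exact absurd h (abs_nonneg _).not_gt
  · rw [abs_of_pos hb, abs_lt] at h
    rw [sign_pos hb, sign_pos (by linarith)]

variable {A : Type*} [CommRing A] {n : ℕ} {φ : A →+* ℝ} {F : Finset (MvPolynomial (Fin n) A)}

theorem IsGoodCurve.sign_eq {X : ℂ → Fin n → ℂ} (hX : IsGoodCurve φ F X)
    {f : MvPolynomial (Fin n) A} (hf : f ∈ F) {h : ℝ} (hh : |h| < 1) :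
    SignType.sign (MvPolynomial.eval₂Hom φ (realPoint X h) f) =
      SignType.sign (MvPolynomial.eval₂Hom φ (realPoint X 0) f) := by
  have hzero : complexEval φ (X 0) f = (MvPolynomial.eval₂Hom φ (realPoint X 0) f : ℝ) := by
    simpa using hX.complexEval_apply_ofReal (h := 0) (by simp) f
  have hne := hX.ne_zero f hf
  have hsteady := (hX.steady f hf).bound h (by simpa using hh)
  rw [hzero, Complex.ofReal_ne_zero] at hne
  rw [hX.complexEval_apply_ofReal hh, hzero, ← Complex.ofReal_sub, Complex.norm_real,
    Complex.norm_real, Real.norm_eq_abs, Real.norm_eq_abs] at hsteady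
  exact sign_eq_of_abs_sub_lt (by linarith [abs_pos.2 hne])

theorem isTame_of_sign {H : (Fin n → ℝ) → ℝ} (hH : ∀ x y, (∀ f ∈ F,
    SignType.sign (MvPolynomial.eval₂Hom φ x f) = SignType.sign (MvPolynomial.eval₂Hom φ y f)) →
      H x = H y) : IsTame φ F 1 0 H := by
  have hconst {X : ℂ → Fin n → ℂ} (hX : IsGoodCurve φ F X) {h : ℝ} (hh : |h| < 1) :
      H (realPoint X h) = H (realPoint X 0) := hH _ _ fun f hf => hX.sign_eq hf hh
  refine ⟨fun X hX h hh => ?_, fun X hX h hh => ?_⟩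
  · simp [hconst hX hh]
  · simp [hconst hX hh, hconst hX (h := -h) (by rwa [abs_neg]), two_mul]

end Sign

section Generic

open scoped FourierTransform

variable {d : ℕ}

instance isProbabilityMeasure_restrict_Icc_zero_one :
    IsProbabilityMeasure (volume.restrict (Icc (0 : Fin d → ℝ) 1)) :=
  ⟨by simp [Real.volume_Icc_pi]⟩

/-- The polynomial function with monomials in `s` and coefficients `c`. -/
def polyFun (s : Finset (Fin d →₀ ℕ)) (c : (Fin d →₀ ℕ) → ℝ) (ξ : Fin d → ℝ) : ℝ :=
  ∑ m ∈ s, c m * ∏ i, ξ i ^ m i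

theorem measurable_polyFun (s : Finset (Fin d →₀ ℕ)) (c : (Fin d →₀ ℕ) → ℝ) :
    Measurable (polyFun s c) := by
  unfold polyFun
  fun_prop

theorem eval_eq_polyFun {Q : MvPolynomial (Fin d) ℝ} {s : Finset (Fin d →₀ ℕ)}
    (hQ : Q.support ⊆ s) (ξ : Fin d → ℝ) :
    MvPolynomial.eval ξ Q = polyFun s (fun m => Q.coeff m) ξ := by
  rw [MvPolynomial.eval_eq', polyFun]
  refine Finset.sum_subset hQ fun m _ hm => ?_
  rw [MvPolynomial.notMem_support_iff.1 hm, zero_mul]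

/-- The polynomial with monomials in `s` and indeterminate coefficients, minus a last variable and
the constant `a`; for `a = 0` and `a = 1/2` their signs decide membership in the window. -/
noncomputable def genericPoly (s : Finset (Fin d →₀ ℕ)) (a : ℝ) :
    MvPolynomial (Fin (d + 1)) (MvPolynomial (Fin d →₀ ℕ) ℝ) :=
  ∑ m ∈ s, MvPolynomial.C (MvPolynomial.X m) * ∏ i, MvPolynomial.X (Fin.castSucc i) ^ m i -
    MvPolynomial.X (Fin.last d) - MvPolynomial.C (MvPolynomial.C a)

theorem eval_genericPoly (s : Finset (Fin d →₀ ℕ)) (a : ℝ) (c : (Fin d →₀ ℕ) → ℝ)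
    (x : Fin (d + 1) → ℝ) :
    MvPolynomial.eval₂Hom (MvPolynomial.eval c) x (genericPoly s a) =
      polyFun s c (Fin.init x) - x (Fin.last d) - a := by
  simp [genericPoly, polyFun, Fin.init, MvPolynomial.eval₂_sum, MvPolynomial.eval₂_prod]

theorem genericPoly_ne_zero (s : Finset (Fin d →₀ ℕ)) (a : ℝ) : genericPoly s a ≠ 0 := by
  intro h
  have heval := eval_genericPoly s a 0 fun _ => 1 - a
  rw [h, map_zero] at heval
  simp [polyFun] at heval

/-- The points whose last coordinate `t` and initial coordinates `ξ` satisfy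
`t ≤ polyFun s c ξ ≤ t + 1/2`. -/
def windowRegion (s : Finset (Fin d →₀ ℕ)) (c : (Fin d →₀ ℕ) → ℝ) : Set (Fin (d + 1) → ℝ) :=
  (fun x => (x (Fin.last d), Fin.init x)) ⁻¹' window (polyFun s c)

theorem measurableSet_windowRegion (s : Finset (Fin d →₀ ℕ)) (c : (Fin d →₀ ℕ) → ℝ) :
    MeasurableSet (windowRegion s c) :=
  ((measurable_pi_apply _).prodMk (measurable_pi_lambda _ fun _ => measurable_pi_apply _))
    (measurableSet_window (measurable_polyFun s c))

theorem mem_windowRegion_iff_sign {s : Finset (Fin d →₀ ℕ)} {c : (Fin d →₀ ℕ) → ℝ}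
    {x : Fin (d + 1) → ℝ} : x ∈ windowRegion s c ↔
      0 ≤ SignType.sign (MvPolynomial.eval₂Hom (MvPolynomial.eval c) x (genericPoly s 0)) ∧
      SignType.sign (MvPolynomial.eval₂Hom (MvPolynomial.eval c) x (genericPoly s (1 / 2))) ≤
        0 := by
  rw [sign_nonneg_iff, sign_nonpos_iff, eval_genericPoly, eval_genericPoly]
  simp only [windowRegion, window, mem_preimage, mem_ofPred_eq, mem_Icc]
  constructor <;> rintro ⟨hlow, hupp⟩ <;> constructor <;> linarith

theorem integral_indicator_windowRegion_snoc (s : Finset (Fin d →₀ ℕ)) (c : (Fin d →₀ ℕ) → ℝ)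
    (t : ℝ) : ∫ ξ in Icc (0 : Fin d → ℝ) 1,
        (windowRegion s c).indicator (fun _ => (1 : ℝ)) (Fin.snoc (α := fun _ => ℝ) ξ t) =
      windowMass (volume.restrict (Icc (0 : Fin d → ℝ) 1)) (polyFun s c) t := by
  have hslice (ξ : Fin d → ℝ) :
      (windowRegion s c).indicator (fun _ => (1 : ℝ)) (Fin.snoc (α := fun _ => ℝ) ξ t) =
        (polyFun s c ⁻¹' Icc t (t + 1 / 2)).indicator (fun _ => 1) ξ := by
    classical
    simp only [indicator_apply, windowRegion, window, mem_preimage, mem_ofPred_eq, Fin.snoc_last,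
      Fin.init_snoc]
  simp only [hslice]
  rw [integral_indicator_const _ (measurable_polyFun s c measurableSet_Icc), smul_eq_mul, mul_one,
    windowMass]

theorem exists_norm_integral_fourierChar_polyFun_le_of_eval_ne_zero (s : Finset (Fin d →₀ ℕ)) :
    ∃ w : MvPolynomial (Fin d →₀ ℕ) ℝ, w ≠ 0 ∧ ∃ C ≥ 0, ∀ c, MvPolynomial.eval c w ≠ 0 →
      ∀ S, (∀ t, windowMass (volume.restrict (Icc (0 : Fin d → ℝ) 1)) (polyFun s c) t ≤ S) →
        ‖∫ ξ in Icc (0 : Fin d → ℝ) 1, (𝐞 (polyFun s c ξ) : ℂ)‖ ≤ C * S := by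
  classical
  obtain ⟨F, hF, c₀, hc₀, K, hK, htame⟩ := exists_isTame_integral_Icc d
    {genericPoly s 0, genericPoly s (1 / 2)} (by simp [(genericPoly_ne_zero s _).symm]) 1 0
    one_pos le_rfl
  obtain ⟨w, hw, C, hC, hbound⟩ := exists_second_diff_bound F hF hc₀ hK
  refine ⟨w, hw, π / 4 * C, by positivity, fun c hc S hS => ?_⟩
  have hmass := htame (MvPolynomial.eval c) ((windowRegion s c).indicator fun _ => 1) 1
    (fun x => indicator_nonneg (fun _ _ => zero_le_one) _)
    (fun x => by rw [indicator_apply]; split_ifs <;> simp)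
    (measurable_const.indicator (measurableSet_windowRegion s c))
    (isTame_of_sign fun x y hxy => by
      simp only [indicator_apply, mem_windowRegion_iff_sign, hxy _ (Finset.mem_insert_self _ _),
        hxy _ (Finset.mem_insert_of_mem (Finset.mem_singleton_self _))])
  simp only [integral_indicator_windowRegion_snoc] at hmass
  obtain ⟨b, hb, hdiff, hle⟩ := hbound (MvPolynomial.eval c) hc _ S
    (fun t => measureReal_nonneg) hS hmass
  calc ‖∫ ξ in Icc (0 : Fin d → ℝ) 1, (𝐞 (polyFun s c ξ) : ℂ)‖ ≤ π / 4 * ∫ t, b t :=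
        norm_integral_fourierChar_le (measurable_polyFun s c) hb hdiff
    _ ≤ π / 4 * (C * S) := by gcongr
    _ = π / 4 * C * S := (mul_assoc _ _ _).symm

theorem exists_eval_ne_zero {ι : Type*} {w : MvPolynomial ι ℝ} (hw : w ≠ 0) (c : ι → ℝ) {η : ℝ}
    (hη : 0 < η) : ∃ c' : ι → ℝ, (∀ i, |c' i - c i| ≤ η) ∧ MvPolynomial.eval c' w ≠ 0 := by
  by_contra! hzero
  refine hw (MvPolynomial.funext_set (fun i => Icc (c i - η) (c i + η))
    (fun i => Icc_infinite (by linarith)) fun x hx => ?_)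
  rw [map_zero]
  refine hzero x fun i => ?_
  obtain ⟨hlow, hupp⟩ := hx i (mem_univ i)
  rw [abs_le]
  constructor <;> linarith

theorem abs_polyFun_sub_le (s : Finset (Fin d →₀ ℕ)) {c c' : (Fin d →₀ ℕ) → ℝ} {η : ℝ}
    (h : ∀ m, |c' m - c m| ≤ η) {ξ : Fin d → ℝ} (hξ : ξ ∈ Icc (0 : Fin d → ℝ) 1) :
    |polyFun s c' ξ - polyFun s c ξ| ≤ s.card * η := by
  rw [polyFun, polyFun, ← Finset.sum_sub_distrib]
  refine (Finset.abs_sum_le_sum_abs _ _).trans ?_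
  rw [← nsmul_eq_mul]
  refine Finset.sum_le_card_nsmul _ _ _ fun m _ => ?_
  have hmonomial : |∏ i, ξ i ^ m i| ≤ 1 := by
    rw [abs_of_nonneg (Finset.prod_nonneg fun i _ => pow_nonneg (hξ.1 i) _)]
    exact Finset.prod_le_one (fun i _ => pow_nonneg (hξ.1 i) _)
      fun i _ => pow_le_one₀ (hξ.1 i) (hξ.2 i)
  rw [← sub_mul, abs_mul]
  exact (mul_le_of_le_one_right (abs_nonneg _) hmonomial).trans (h m)

theorem exists_polyFun_near (s : Finset (Fin d →₀ ℕ)) {w : MvPolynomial (Fin d →₀ ℕ) ℝ}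
    (hw : w ≠ 0) (c : (Fin d →₀ ℕ) → ℝ) {δ : ℝ} (hδ : 0 < δ) :
    ∃ c', MvPolynomial.eval c' w ≠ 0 ∧
      ∀ ξ ∈ Icc (0 : Fin d → ℝ) 1, |polyFun s c' ξ - polyFun s c ξ| ≤ δ := by
  obtain ⟨c', hc', hne⟩ :=
    exists_eval_ne_zero hw c (η := δ / (s.card + 1)) (by positivity)
  refine ⟨c', hne, fun ξ hξ => (abs_polyFun_sub_le s hc' hξ).trans ?_⟩
  rw [mul_div_assoc', div_le_iff₀ (by positivity)]
  linarith

theorem exists_norm_integral_fourierChar_polyFun_le (s : Finset (Fin d →₀ ℕ)) :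
    ∃ C : ℝ, 0 ≤ C ∧ ∀ c S,
      (∀ t, (volume.restrict (Icc (0 : Fin d → ℝ) 1)).real (polyFun s c ⁻¹' Icc t (t + 1)) ≤ S) →
        ‖∫ ξ in Icc (0 : Fin d → ℝ) 1, (𝐞 (polyFun s c ξ) : ℂ)‖ ≤ C * S := by
  obtain ⟨w, hw, C, hC, hbound⟩ := exists_norm_integral_fourierChar_polyFun_le_of_eval_ne_zero s
  refine ⟨C, hC, fun c S hS => le_of_forall_pos_le_add fun ε hε => ?_⟩
  obtain ⟨c', hne, hnear⟩ :=
    exists_polyFun_near s hw c (δ := min (1 / 4) (ε / (2 * π))) (by positivity)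
  have hclose : ∀ᵐ ξ ∂volume.restrict (Icc (0 : Fin d → ℝ) 1),
      |polyFun s c' ξ - polyFun s c ξ| ≤ min (1 / 4) (ε / (2 * π)) :=
    ae_restrict_of_forall_mem measurableSet_Icc hnear
  have hgeneric := hbound c' hne S fun t =>
    (windowMass_le_of_abs_sub_le (hclose.mono fun ξ hξ => hξ.trans (min_le_left _ _)) t).trans
      (hS (t - 1 / 4))
  have hdist := norm_integral_fourierChar_sub_le (measurable_polyFun s c)
    (measurable_polyFun s c') (hclose.mono fun ξ hξ => hξ.trans (min_le_right _ _))
  rw [mul_div_cancel₀ _ two_pi_pos.ne'] at hdist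
  linarith [norm_le_norm_add_norm_sub (∫ ξ in Icc (0 : Fin d → ℝ) 1, (𝐞 (polyFun s c' ξ) : ℂ))
    (∫ ξ in Icc (0 : Fin d → ℝ) 1, (𝐞 (polyFun s c ξ) : ℂ))]

theorem support_subset_Icc_of_totalDegree_le {σ R : Type*} [Finite σ] [DecidableEq σ]
    [CommSemiring R] {Q : MvPolynomial σ R} {k : ℕ} (hQ : Q.totalDegree ≤ k) :
    Q.support ⊆ Finset.Icc 0 (Finsupp.equivFunOnFinite.symm fun _ => k) := by
  intro m hm
  rw [Finset.mem_Icc]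
  exact ⟨zero_le, fun i => (Finsupp.le_degree i m).trans
    ((MvPolynomial.le_totalDegree hm).trans hQ)⟩

end Generic

end StationarySet

/-- **Stationary set estimate** (Theorem 1.1, polynomial case).
For all `d ≥ 1` and `k ≥ 1` there is a constant `C = C(d,k)` such that for every real
polynomial `Q` in `d` variables of total degree at most `k`,
`|∫_{[0,1]^d} e(Q(ξ)) dξ| ≤ C · sup_{μ ∈ ℝ} |{ξ ∈ [0,1]^d : μ ≤ Q(ξ) ≤ μ + 1}|`,
where `e(t) = exp(2πit)` and `|·|` is Lebesgue measure. -/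
theorem stationary_set_estimate (d k : ℕ) (hd : 1 ≤ d) (hk : 1 ≤ k) :
    ∃ C : ℝ, 0 ≤ C ∧
      ∀ Q : MvPolynomial (Fin d) ℝ, Q.totalDegree ≤ k →
        ‖∫ ξ in Icc (0 : Fin d → ℝ) 1,
            Complex.exp (2 * Real.pi * Complex.I * (MvPolynomial.eval ξ Q))‖ ≤
          C * (⨆ μ : ℝ, volume {ξ ∈ Icc (0 : Fin d → ℝ) 1 |
              μ ≤ MvPolynomial.eval ξ Q ∧ MvPolynomial.eval ξ Q ≤ μ + 1}).toReal := by
  obtain ⟨C, hC, hbound⟩ := StationarySet.exists_norm_integral_fourierChar_polyFun_le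
    (Finset.Icc 0 (Finsupp.equivFunOnFinite.symm fun _ : Fin d => k))
  refine ⟨C, hC, fun Q hQ => ?_⟩
  simp only [← StationarySet.coe_fourierChar_eq, StationarySet.eval_eq_polyFun
    (StationarySet.support_subset_Icc_of_totalDegree_le hQ)]
  exact hbound _ _ (StationarySet.measureReal_restrict_preimage_Icc_le measurableSet_Icc
    isCompact_Icc.measure_ne_top _)
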